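/- arXiv:1708.00832 — 3 statements merged into one kernel-verified Lean document; each statement's English description precedes it below -/
import Mathlib

section
/- Let T = {1342, 2143, 3412} (patterns of length 4). Then the generating function for T-avoiders satisfies, as formal power series over ℚ, (1-x)^3·(1-3x)·(1-3x+x^2)·F_T(x) = (1-2x)·(1 - 6x + 12x^2 - 9x^3 + 4x^4); that is, F_T(x) = (1-2x)(1-6x+12x^2-9x^3+4x^4)/((1-x)^3(1-3x)(1-3x+x^2)). -/
open PowerSeries

/-- A permutation `π` of `{0,…,n-1}` contains the pattern `σ` (of length `k`) if there is an
order-embedding of positions on which the values of `π` appear in the same relative order as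
the values of `σ`. -/
def ContainsPattern {n k : ℕ} (π : Equiv.Perm (Fin n)) (σ : Fin k → Fin k) : Prop :=
  ∃ f : Fin k ↪o Fin n, ∀ a b : Fin k, σ a < σ b ↔ π (f a) < π (f b)

/-- The number of permutations of length `n` avoiding every pattern in `T`. -/
noncomputable def avoiderCount (T : Set (Fin 4 → Fin 4)) (n : ℕ) : ℕ :=
  Nat.card {π : Equiv.Perm (Fin n) // ∀ σ ∈ T, ¬ ContainsPattern π σ}

/-- The generating function `F_T(x) = ∑_n |S_n(T)| xⁿ` over `ℚ`. -/
noncomputable def avoiderGF (T : Set (Fin 4 → Fin 4)) : PowerSeries ℚ :=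
  PowerSeries.mk fun n => (avoiderCount T n : ℚ)

/-- The generating function of the Catalan numbers over `ℚ`. -/
noncomputable def catalanGF : PowerSeries ℚ :=
  PowerSeries.mk fun n => (catalan n : ℚ)

open Finset Equiv

/-!
Avoiders are grown by appending a last value: appending `v` raises the values `≥ v` by one, and the
result is an avoider unless `v` completes a forbidden pattern, in which case the site `v` is
blocked. A blocked site never reopens, and growing from the permutation of length one meets only
five kinds of permutations, each determined for counting purposes by the number `j` of sites above
all blocked ones. The generating functions of the subtrees below these nodes therefore satisfy a
linear system indexed by `j`. Those of the saturated nodes obey a first-order recurrence in `j`, and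
all others are affine in them with coefficients rational in `X` and independent of `j`. For the two
kinds whose equation refers to themselves at `j + 1` this follows from uniqueness: a sequence of
power series in which `X * H (j + 1)` divides `H j` for all `j` vanishes.
-/

section GeneratingTree

variable {n k : ℕ}

/-- The permutation of length `n + 1` with last value `v` whose first `n` values are in the same
relative order as those of `π`. -/
def appendValue (π : Perm (Fin n)) (v : Fin (n + 1)) : Perm (Fin (n + 1)) :=
  ((finSuccEquiv' (Fin.last n)).trans (optionCongr π)).trans (finSuccEquiv' v).symm

@[simp]
theorem appendValue_last (π : Perm (Fin n)) (v : Fin (n + 1)) :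
    appendValue π v (Fin.last n) = v := by
  simp [appendValue]

@[simp]
theorem appendValue_castSucc (π : Perm (Fin n)) (v : Fin (n + 1)) (i : Fin n) :
    appendValue π v i.castSucc = v.succAbove (π i) := by
  rw [← Fin.succAbove_last]
  simp [appendValue, -Fin.succAbove_last]

theorem appendValue_bijective :
    Function.Bijective fun p : Perm (Fin n) × Fin (n + 1) => appendValue p.1 p.2 := by
  rw [Fintype.bijective_iff_injective_and_card]
  refine ⟨?_, by simp [Fintype.card_perm, Nat.factorial_succ, mul_comm]⟩
  rintro ⟨π, v⟩ ⟨π', v'⟩ (h : appendValue π v = appendValue π' v')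
  obtain rfl : v = v' := by simpa using congr($h (Fin.last n))
  have hπ (i : Fin n) : π i = π' i := by simpa using congr($h i.castSucc)
  rw [Equiv.ext hπ]

/-- `π` contains none of the patterns in `T`. -/
def Avoids (T : Set (Fin k → Fin k)) (π : Perm (Fin n)) : Prop :=
  ∀ σ ∈ T, ¬ ContainsPattern π σ

theorem ContainsPattern.appendValue {π : Perm (Fin n)} {σ : Fin k → Fin k}
    (h : ContainsPattern π σ) (v : Fin (n + 1)) : ContainsPattern (appendValue π v) σ := by
  obtain ⟨f, hf⟩ := h
  exact ⟨f.trans Fin.castSuccOrderEmb, fun a b => by simp [hf]⟩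

theorem Avoids.of_appendValue {T : Set (Fin k → Fin k)} {π : Perm (Fin n)} {v : Fin (n + 1)}
    (h : Avoids T (appendValue π v)) : Avoids T π :=
  fun σ hσ hπ => h σ hσ (hπ.appendValue v)

open Classical in
/-- The number of `T`-avoiders obtained from `π` by appending `d` values one after the other,
that is, the number of nodes at depth `d` below `π` in the generating tree of `T`-avoiders. -/
noncomputable def descendantCount (T : Set (Fin k → Fin k)) :
    (d : ℕ) → {n : ℕ} → Perm (Fin n) → ℕ
  | 0, _, π => if Avoids T π then 1 else 0
  | d + 1, _, π => ∑ v, descendantCount T d (appendValue π v)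

theorem descendantCount_eq_zero {T : Set (Fin k → Fin k)} {π : Perm (Fin n)}
    (h : ¬ Avoids T π) (d : ℕ) : descendantCount T d π = 0 := by
  induction d generalizing n with
  | zero => exact if_neg h
  | succ d ih => exact sum_eq_zero fun v _ => ih fun hv => h hv.of_appendValue

theorem sum_descendantCount (T : Set (Fin 4 → Fin 4)) (n d : ℕ) :
    ∑ π : Perm (Fin n), descendantCount T d π = avoiderCount T (n + d) := by
  classical
  induction d generalizing n with
  | zero =>
    have hcard : avoiderCount T n = #{π : Perm (Fin n) | Avoids T π} :=
      Nat.subtype_card _ fun π => mem_filter_univ π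
    rw [add_zero, hcard, card_filter]
    rfl
  | succ d ih =>
    calc ∑ π : Perm (Fin n), ∑ v, descendantCount T d (appendValue π v)
      _ = ∑ τ : Perm (Fin (n + 1)), descendantCount T d τ := by
        rw [← Fintype.sum_prod_type', appendValue_bijective.sum_comp]
      _ = avoiderCount T (n + (d + 1)) := by rw [ih, add_right_comm, add_assoc]

end GeneratingTree

section Precedence

variable {n : ℕ}

/-- The value `a` occurs to the left of the value `b` in `π`. Values are natural numbers, so the
relation implies `a < n` and `b < n`. -/
def Precedes (π : Perm (Fin n)) (a b : ℕ) : Prop :=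
  ∃ i j : Fin n, i < j ∧ (π i : ℕ) = a ∧ (π j : ℕ) = b

theorem Precedes.lt {π : Perm (Fin n)} {a b : ℕ} (h : Precedes π a b) : a < n ∧ b < n := by
  obtain ⟨i, j, -, rfl, rfl⟩ := h
  exact ⟨(π i).isLt, (π j).isLt⟩

/-- The value that an old value `a` takes once a new value `v` has been inserted. -/
def shiftUp (v a : ℕ) : ℕ := if a < v then a else a + 1

theorem val_succAbove_eq_shiftUp (v : Fin (n + 1)) (i : Fin n) :
    (v.succAbove i : ℕ) = shiftUp v i := by
  simp only [Fin.succAbove, Fin.lt_def, shiftUp, Fin.val_castSucc]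
  split_ifs <;> rfl

theorem precedes_appendValue_iff {π : Perm (Fin n)} {v : Fin (n + 1)} {x y : ℕ} :
    Precedes (appendValue π v) x y ↔ (x ≠ v ∧ x ≤ n ∧ y = v) ∨
      ∃ a b, Precedes π a b ∧ x = shiftUp v a ∧ y = shiftUp v b := by
  constructor
  · rintro ⟨i, j, hij, rfl, rfl⟩
    induction i using Fin.lastCases with
    | last => exact absurd hij (Fin.le_last j).not_gt
    | cast i =>
      induction j using Fin.lastCases with
      | last => exact Or.inl <| by simp [Fin.val_ne_iff, Fin.succAbove_ne, Fin.is_le]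
      | cast j =>
        exact Or.inr ⟨_, _, ⟨i, j, by simpa using hij, rfl, rfl⟩, by
          simp [val_succAbove_eq_shiftUp]⟩
  · rintro (⟨hxv, hxn, rfl⟩ | ⟨_, _, ⟨i, j, hij, rfl, rfl⟩, rfl, rfl⟩)
    · obtain ⟨a, ha⟩ := Fin.exists_succAbove_eq (x := ⟨x, by lia⟩) (y := v) (by grind)
      exact ⟨(π.symm a).castSucc, Fin.last n, Fin.castSucc_lt_last _, by simp [ha], by simp⟩
    · exact ⟨i.castSucc, j.castSucc, by simpa using hij, by
        simp [val_succAbove_eq_shiftUp]⟩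

theorem precedes_appendValue_self (π : Perm (Fin n)) {v : Fin (n + 1)} {x : ℕ} (hxv : x ≠ v)
    (hxn : x ≤ n) : Precedes (appendValue π v) x v :=
  precedes_appendValue_iff.2 <| Or.inl ⟨hxv, hxn, rfl⟩

theorem Precedes.appendValue {π : Perm (Fin n)} {a b : ℕ} (h : Precedes π a b)
    (v : Fin (n + 1)) : Precedes (appendValue π v) (shiftUp v a) (shiftUp v b) :=
  precedes_appendValue_iff.2 <| Or.inr ⟨a, b, h, rfl, rfl⟩

theorem Precedes.appendValue_self {π : Perm (Fin n)} {a b : ℕ} (h : Precedes π a b)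
    (v : Fin (n + 1)) : Precedes (_root_.appendValue π v) (shiftUp v b) v := by
  have := h.lt
  exact precedes_appendValue_self π (by grind [shiftUp]) (by grind [shiftUp])

theorem exists_of_precedes_precedes_appendValue {π : Perm (Fin n)} {v : Fin (n + 1)} {x y z : ℕ}
    (hxy : Precedes (appendValue π v) x y) (hyz : Precedes (appendValue π v) y z) :
    ∃ a b, Precedes π a b ∧ x = shiftUp v a ∧ y = shiftUp v b ∧
      (z = v ∨ ∃ c, Precedes π b c ∧ z = shiftUp v c) := by
  rw [precedes_appendValue_iff] at hxy hyz
  grind [shiftUp]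

theorem containsPattern_four_iff {π : Perm (Fin n)} {σ : Fin 4 → Fin 4} :
    ContainsPattern π σ ↔ ∃ a b c d, Precedes π a b ∧ Precedes π b c ∧ Precedes π c d ∧
      ∀ p q : Fin 4, σ p < σ q ↔ (![a, b, c, d] p : ℕ) < ![a, b, c, d] q := by
  constructor
  · rintro ⟨f, hf⟩
    refine ⟨π (f 0), π (f 1), π (f 2), π (f 3), ⟨_, _, ?_, rfl, rfl⟩, ⟨_, _, ?_, rfl, rfl⟩,
      ⟨_, _, ?_, rfl, rfl⟩, fun p q => ?_⟩
    iterate 3 exact f.strictMono (by decide)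
    rw [hf]
    fin_cases p <;> fin_cases q <;> rfl
  · rintro ⟨_, _, _, _, ⟨i, j, hij, rfl, rfl⟩, ⟨j', k, hjk, hj, rfl⟩, ⟨k', l, hkl, hk, rfl⟩, h⟩
    obtain rfl : j' = j := π.injective (Fin.ext hj)
    obtain rfl : k' = k := π.injective (Fin.ext hk)
    have hmono : StrictMono ![i, j', k', l] := by simp [*]
    refine ⟨OrderEmbedding.ofStrictMono _ hmono, fun p q => ?_⟩
    rw [h]
    fin_cases p <;> fin_cases q <;> rfl

end Precedence

section Sites

variable {n : ℕ} {π : Perm (Fin n)}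

/-- The patterns 1342, 2143 and 3412, written with the letters `0, 1, 2, 3`. -/
abbrev forbiddenPatterns : Set (Fin 4 → Fin 4) :=
  {![0, 2, 3, 1], ![1, 0, 3, 2], ![2, 3, 0, 1]}

/-- The word `abcd` is order isomorphic to one of the forbidden patterns. -/
def IsForbidden (a b c d : ℕ) : Prop :=
  (a < d ∧ d < b ∧ b < c) ∨ (b < a ∧ a < d ∧ d < c) ∨ (c < d ∧ d < a ∧ a < b)

/-- If `w` is inserted after the word `abc`, the resulting word is order isomorphic to a forbidden
pattern. The weak inequalities reflect that the old values `≥ w` move up. -/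
def CompletesForbidden (a b c w : ℕ) : Prop :=
  (a < w ∧ w ≤ b ∧ b < c) ∨ (b < a ∧ a < w ∧ w ≤ c) ∨ (c < w ∧ w ≤ a ∧ a < b)

/-- Appending the value `w` to `π` creates an occurrence of a forbidden pattern. -/
def SiteBlocked (π : Perm (Fin n)) (w : ℕ) : Prop :=
  ∃ a b c, Precedes π a b ∧ Precedes π b c ∧ CompletesForbidden a b c w

theorem SiteBlocked.pos {w : ℕ} (h : SiteBlocked π w) : 0 < w := by
  obtain ⟨a, b, c, -, -, h⟩ := h
  grind [CompletesForbidden]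

theorem avoids_forbiddenPatterns_iff :
    Avoids forbiddenPatterns π ↔ ¬ ∃ a b c d,
      Precedes π a b ∧ Precedes π b c ∧ Precedes π c d ∧ IsForbidden a b c d := by
  simp only [Avoids, Set.mem_insert_iff, Set.mem_singleton_iff, forall_eq_or_imp, forall_eq,
    containsPattern_four_iff, ← not_or, ← exists_or, ← and_or_left]
  refine not_congr <| exists₄_congr fun a b c d => and_congr_right fun _ =>
    and_congr_right fun _ => and_congr_right fun _ => ?_
  simp only [Nat.succ_eq_add_one, Nat.reduceAdd, Fin.isValue, Fin.forall_fin_succ,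
    Matrix.cons_val_zero, not_lt_zero, false_iff, not_lt, Matrix.cons_val_succ,
    Matrix.cons_val_fin_one, Fin.lt_one_iff, forall_const, Std.le_refl, Fin.reduceLT, true_iff,
    true_and, lt_self_iff_false, Fin.reduceEq, one_ne_zero, and_true, IsForbidden]
  omega

theorem shiftUp_lt_shiftUp_iff {v a b : ℕ} : shiftUp v a < shiftUp v b ↔ a < b := by
  grind [shiftUp]

theorem isForbidden_shiftUp_iff {v a b c d : ℕ} :
    IsForbidden (shiftUp v a) (shiftUp v b) (shiftUp v c) (shiftUp v d) ↔ IsForbidden a b c d := by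
  simp only [IsForbidden, shiftUp_lt_shiftUp_iff]

theorem isForbidden_shiftUp_self_iff {v a b c : ℕ} :
    IsForbidden (shiftUp v a) (shiftUp v b) (shiftUp v c) v ↔ CompletesForbidden a b c v := by
  grind [IsForbidden, CompletesForbidden, shiftUp]

theorem avoids_appendValue_iff {v : Fin (n + 1)} :
    Avoids forbiddenPatterns (appendValue π v) ↔
      Avoids forbiddenPatterns π ∧ ¬ SiteBlocked π v := by
  simp only [avoids_forbiddenPatterns_iff, ← not_or]
  refine not_congr ⟨?_, ?_⟩
  · rintro ⟨x, y, z, u, hxy, hyz, hzu, h⟩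
    obtain ⟨a, b, hab, rfl, rfl, -⟩ := exists_of_precedes_precedes_appendValue hxy hyz
    obtain ⟨b', c, hbc, hb, rfl, hu⟩ := exists_of_precedes_precedes_appendValue hyz hzu
    obtain rfl : b = b' := by grind [shiftUp]
    rcases hu with rfl | ⟨d, hcd, rfl⟩
    · exact Or.inr ⟨a, b, c, hab, hbc, isForbidden_shiftUp_self_iff.1 h⟩
    · exact Or.inl ⟨a, b, c, d, hab, hbc, hcd, isForbidden_shiftUp_iff.1 h⟩
  · rintro (⟨a, b, c, d, hab, hbc, hcd, h⟩ | ⟨a, b, c, hab, hbc, h⟩)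
    · exact ⟨_, _, _, _, hab.appendValue v, hbc.appendValue v, hcd.appendValue v,
        isForbidden_shiftUp_iff.2 h⟩
    · exact ⟨_, _, _, _, hab.appendValue v, hbc.appendValue v, hbc.appendValue_self v,
        isForbidden_shiftUp_self_iff.2 h⟩

theorem siteBlocked_appendValue_iff {v : Fin (n + 1)} {w : ℕ} :
    SiteBlocked (appendValue π v) w ↔
      (∃ a b c, Precedes π a b ∧ Precedes π b c ∧
        CompletesForbidden (shiftUp v a) (shiftUp v b) (shiftUp v c) w) ∨
      ∃ a b, Precedes π a b ∧ CompletesForbidden (shiftUp v a) (shiftUp v b) v w := by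
  constructor
  · rintro ⟨x, y, z, hxy, hyz, h⟩
    obtain ⟨a, b, hab, rfl, rfl, rfl | ⟨c, hbc, rfl⟩⟩ :=
      exists_of_precedes_precedes_appendValue hxy hyz
    · exact Or.inr ⟨a, b, hab, h⟩
    · exact Or.inl ⟨a, b, c, hab, hbc, h⟩
  · rintro (⟨a, b, c, hab, hbc, h⟩ | ⟨a, b, hab, h⟩)
    · exact ⟨_, _, _, hab.appendValue v, hbc.appendValue v, h⟩
    · exact ⟨_, _, _, hab.appendValue v, hab.appendValue_self v, h⟩

theorem siteBlocked_appendValue_iff_of_le {v : Fin (n + 1)} {w : ℕ} (hw : w ≤ v) :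
    SiteBlocked (appendValue π v) w ↔ SiteBlocked π w ∨
      ∃ a b, Precedes π a b ∧ (a < w ∧ w ≤ b ∧ b < v ∨ b < a ∧ a < w) := by
  have hlt (a : ℕ) : shiftUp v a < w ↔ a < w := by grind [shiftUp]
  have hle (a : ℕ) : w ≤ shiftUp v a ↔ w ≤ a := by grind [shiftUp]
  have hnew (a b : ℕ) : CompletesForbidden (shiftUp v a) (shiftUp v b) v w ↔
      a < w ∧ w ≤ b ∧ b < v ∨ b < a ∧ a < w := by
    grind [CompletesForbidden, shiftUp]
  simp only [siteBlocked_appendValue_iff, hnew]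
  simp only [SiteBlocked, CompletesForbidden, hlt, hle, shiftUp_lt_shiftUp_iff]

theorem siteBlocked_appendValue_iff_of_lt {v : Fin (n + 1)} {w : ℕ} (hw : v < w) :
    SiteBlocked (appendValue π v) w ↔ SiteBlocked π (w - 1) ∨
      ∃ a b, Precedes π a b ∧ a < b ∧ w - 1 ≤ a := by
  have hlt (a : ℕ) : shiftUp v a < w ↔ a < w - 1 := by grind [shiftUp]
  have hle (a : ℕ) : w ≤ shiftUp v a ↔ w - 1 ≤ a := by grind [shiftUp]
  have hnew (a b : ℕ) : CompletesForbidden (shiftUp v a) (shiftUp v b) v w ↔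
      a < b ∧ w - 1 ≤ a := by
    grind [CompletesForbidden, shiftUp]
  simp only [siteBlocked_appendValue_iff, hnew]
  simp only [SiteBlocked, CompletesForbidden, hlt, hle, shiftUp_lt_shiftUp_iff]

end Sites

section Classes

variable {n : ℕ} {π : Perm (Fin n)} {m r s w : ℕ} {v : Fin (n + 1)}

/-- Only sites below `s` are blocked, and every ascending pair starts below `s`. -/
structure IsConfined (π : Perm (Fin n)) (s : ℕ) : Prop where
  pos : 0 < s
  le : s ≤ n
  lt_of_siteBlocked : ∀ w, SiteBlocked π w → w < s
  exists_ascent : ∃ a b, a < b ∧ Precedes π a b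
  lt_of_ascent : ∀ a b, a < b → Precedes π a b → a < s

/-- The blocked sites are exactly those strictly between `0` and `s`, and two values below `s` are
inverted. -/
structure IsSaturated (π : Perm (Fin n)) (s : ℕ) : Prop extends IsConfined π s where
  siteBlocked : ∀ w, 0 < w → w < s → SiteBlocked π w
  exists_inversion : ∃ a b, b < a ∧ a < s ∧ Precedes π a b

/-- The site `m` is the only open one strictly between `0` and `s`. Appending `m` keeps this
property, while appending any other open value blocks `m`. -/
structure IsSaturatedExcept (π : Perm (Fin n)) (m s : ℕ) : Prop extends IsConfined π s where
  exception_pos : 0 < m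
  exception_lt : m < s
  siteBlocked_iff : ∀ w, 0 < w → w < s → (SiteBlocked π w ↔ w ≠ m)
  exists_inversion : ∃ a b, b < a ∧ a < s ∧ Precedes π a b
  not_inversion : ∀ a b, b < a → a < m → ¬ Precedes π a b
  exists_ascent_above : ∃ a b, m ≤ a ∧ a < b ∧ Precedes π a b
  exists_ascent_across : ∃ a b, a < m ∧ m ≤ b ∧ b < s ∧ Precedes π a b

/-- The blocked sites are exactly those strictly between `0` and `s`, but the values up to `s` are
increasing, so that appending `s` does not block `s`. -/
structure IsUnsaturated (π : Perm (Fin n)) (s : ℕ) : Prop extends IsConfined π s where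
  add_two_le : s + 2 ≤ n
  siteBlocked : ∀ w, 0 < w → w < s → SiteBlocked π w
  zero_precedes : Precedes π 0 s
  zero_precedes_succ : Precedes π 0 (s + 1)
  succ_precedes : Precedes π (s + 1) s
  not_inversion : ∀ a b, b < a → a ≤ s → ¬ Precedes π a b

/-- `π` is the word `(n - 1) ⋯ (r + 1) 0 1 ⋯ r`. -/
structure IsVShaped (π : Perm (Fin n)) (r : ℕ) : Prop where
  lt : r < n
  precedes_iff : ∀ a b,
    Precedes π a b ↔ a < n ∧ b < n ∧ (a < b ∧ b ≤ r ∨ b < a ∧ r < a)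

namespace IsConfined

theorem appendValue_of_lt (h : IsConfined π s) (hv : v < s) :
    IsConfined (appendValue π v) (s + 1) where
  pos := s.succ_pos
  le := Nat.succ_le_succ h.le
  lt_of_siteBlocked w hw := by
    have := h.lt_of_siteBlocked
    have := h.lt_of_ascent
    grind [siteBlocked_appendValue_iff_of_le, siteBlocked_appendValue_iff_of_lt]
  exists_ascent := by
    obtain ⟨a, b, hab, hπ⟩ := h.exists_ascent
    exact ⟨_, _, shiftUp_lt_shiftUp_iff.2 hab, hπ.appendValue v⟩
  lt_of_ascent a b hab hπ := by
    have := h.lt_of_ascent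
    grind [precedes_appendValue_iff, shiftUp]

theorem appendValue_of_le (h : IsConfined π s) (hv : s ≤ v) :
    IsConfined (appendValue π v) (v + 1) where
  pos := v.val.succ_pos
  le := v.isLt
  lt_of_siteBlocked w hw := by
    have := h.lt_of_siteBlocked
    have := h.lt_of_ascent
    grind [siteBlocked_appendValue_iff_of_le, siteBlocked_appendValue_iff_of_lt]
  exists_ascent := by
    obtain ⟨a, b, hab, hπ⟩ := h.exists_ascent
    exact ⟨_, _, shiftUp_lt_shiftUp_iff.2 hab, hπ.appendValue v⟩
  lt_of_ascent a b hab hπ := by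
    have := h.lt_of_ascent
    grind [precedes_appendValue_iff, shiftUp]

theorem isSaturated_appendValue_zero (h : IsConfined π s) (hv : (v : ℕ) = 0)
    (hcover : ∀ w, 0 < w → w < s → SiteBlocked π w ∨ ∃ a b, Precedes π a b ∧ a < b ∧ w ≤ a) :
    IsSaturated (appendValue π v) (s + 1) where
  toIsConfined := h.appendValue_of_lt (hv ▸ h.pos)
  siteBlocked w hw hws := by
    obtain ⟨a, b, hab, hπ⟩ := h.exists_ascent
    rw [siteBlocked_appendValue_iff_of_lt (by lia)]
    have := hcover (w - 1)
    grind
  exists_inversion := by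
    have := h.pos
    have := h.le
    exact ⟨1, v, by lia, by lia, precedes_appendValue_self π (by lia) (by lia)⟩

theorem isSaturated_appendValue_of_le (h : IsConfined π s) (hv : s ≤ v)
    (hinv : ∃ a b : ℕ, b < a ∧ a < v ∧ Precedes π a b)
    (hcover : ∀ w : ℕ, 0 < w → w ≤ v → SiteBlocked π w ∨
      ∃ a b, Precedes π a b ∧ (a < w ∧ w ≤ b ∧ b < v ∨ b < a ∧ a < w)) :
    IsSaturated (appendValue π v) (v + 1) where
  toIsConfined := h.appendValue_of_le hv
  siteBlocked w hw hws := by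
    exact (siteBlocked_appendValue_iff_of_le (by lia)).2 (hcover w hw (by lia))
  exists_inversion := by
    obtain ⟨a, b, hba, hav, hπ⟩ := hinv
    exact ⟨_, _, shiftUp_lt_shiftUp_iff.2 hba, by grind [shiftUp], hπ.appendValue v⟩

end IsConfined

namespace IsSaturated

theorem appendValue_zero (h : IsSaturated π s) (hv : (v : ℕ) = 0) :
    IsSaturated (appendValue π v) (s + 1) :=
  h.isSaturated_appendValue_zero hv fun _ hw hws => Or.inl (h.siteBlocked _ hw hws)

theorem appendValue_of_le (h : IsSaturated π s) (hv : s ≤ v) :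
    IsSaturated (appendValue π v) (v + 1) := by
  obtain ⟨a, b, hba, has, hπ⟩ := h.exists_inversion
  refine h.isSaturated_appendValue_of_le hv ⟨a, b, hba, by lia, hπ⟩ fun w hw _ => ?_
  rcases lt_or_ge w s with hws | hsw
  · exact Or.inl (h.siteBlocked _ hw hws)
  · exact Or.inr ⟨a, b, hπ, Or.inr ⟨hba, by lia⟩⟩

end IsSaturated

namespace IsSaturatedExcept

theorem isSaturated_appendValue_zero (h : IsSaturatedExcept π m s) (hv : (v : ℕ) = 0) :
    IsSaturated (appendValue π v) (s + 1) := by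
  obtain ⟨a, b, hma, hab, hπ⟩ := h.exists_ascent_above
  refine h.toIsConfined.isSaturated_appendValue_zero hv fun w hw hws => ?_
  rcases eq_or_ne w m with rfl | hwm
  · exact Or.inr ⟨a, b, hπ, hab, hma⟩
  · exact Or.inl ((h.siteBlocked_iff _ hw hws).2 hwm)

theorem isSaturated_appendValue_of_le (h : IsSaturatedExcept π m s) (hv : s ≤ v) :
    IsSaturated (appendValue π v) (v + 1) := by
  obtain ⟨a, b, hba, has, hπ⟩ := h.exists_inversion
  obtain ⟨a', b', ham, hmb, hbs, hπ'⟩ := h.exists_ascent_across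
  refine h.toIsConfined.isSaturated_appendValue_of_le hv ⟨a, b, hba, by lia, hπ⟩ fun w hw _ => ?_
  rcases lt_or_ge w s with hws | hsw
  · rcases eq_or_ne w m with rfl | hwm
    · exact Or.inr ⟨a', b', hπ', Or.inl ⟨ham, hmb, by lia⟩⟩
    · exact Or.inl ((h.siteBlocked_iff _ hw hws).2 hwm)
  · exact Or.inr ⟨a, b, hπ, Or.inr ⟨hba, by lia⟩⟩

theorem appendValue_exception (h : IsSaturatedExcept π m s) (hv : (v : ℕ) = m) :
    IsSaturatedExcept (appendValue π v) m (s + 1) where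
  toIsConfined := h.toIsConfined.appendValue_of_lt (hv ▸ h.exception_lt)
  exception_pos := h.exception_pos
  exception_lt := h.exception_lt.trans s.lt_succ_self
  siteBlocked_iff w hw hws := by
    have := h.exception_pos
    have := h.exception_lt
    have := h.siteBlocked_iff w
    have := h.siteBlocked_iff (w - 1)
    have := h.not_inversion
    have := h.exists_ascent_above
    grind [siteBlocked_appendValue_iff_of_le, siteBlocked_appendValue_iff_of_lt]
  exists_inversion := by
    obtain ⟨a, b, hba, has, hπ⟩ := h.exists_inversion
    exact ⟨_, _, shiftUp_lt_shiftUp_iff.2 hba, by grind [shiftUp], hπ.appendValue v⟩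
  not_inversion a b hba := by
    have := h.not_inversion
    grind [precedes_appendValue_iff, shiftUp]
  exists_ascent_above := by
    obtain ⟨a, b, hma, hab, hπ⟩ := h.exists_ascent_above
    exact ⟨_, _, by grind [shiftUp], shiftUp_lt_shiftUp_iff.2 hab, hπ.appendValue v⟩
  exists_ascent_across := by
    obtain ⟨a, b, ham, hmb, hbs, hπ⟩ := h.exists_ascent_across
    exact ⟨_, _, by grind [shiftUp], by grind [shiftUp], by grind [shiftUp], hπ.appendValue v⟩

end IsSaturatedExcept

namespace IsUnsaturated

theorem isSaturated_appendValue_zero (h : IsUnsaturated π s) (hv : (v : ℕ) = 0) :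
    IsSaturated (appendValue π v) (s + 1) :=
  h.toIsConfined.isSaturated_appendValue_zero hv fun _ hw hws => Or.inl (h.siteBlocked _ hw hws)

theorem isSaturated_appendValue_of_le (h : IsUnsaturated π s) (hv : s + 2 ≤ v) :
    IsSaturated (appendValue π v) (v + 1) := by
  refine h.toIsConfined.isSaturated_appendValue_of_le (by lia)
    ⟨s + 1, s, by lia, by lia, h.succ_precedes⟩ fun w hw _ => ?_
  rcases lt_or_ge w s with hws | -
  · exact Or.inl (h.siteBlocked _ hw hws)
  rcases le_or_gt w (s + 1) with hws | hsw
  · exact Or.inr ⟨0, s + 1, h.zero_precedes_succ, Or.inl ⟨hw, hws, hv⟩⟩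
  · exact Or.inr ⟨s + 1, s, h.succ_precedes, Or.inr ⟨s.lt_succ_self, hsw⟩⟩

theorem appendValue_bound (h : IsUnsaturated π s) (hv : (v : ℕ) = s) :
    IsUnsaturated (appendValue π v) s where
  pos := h.pos
  le := h.le.trans n.le_succ
  lt_of_siteBlocked w hw := by
    have := h.lt_of_siteBlocked
    have := h.lt_of_ascent
    have := h.not_inversion
    grind [siteBlocked_appendValue_iff_of_le, siteBlocked_appendValue_iff_of_lt]
  exists_ascent := ⟨0, v, hv ▸ h.pos, precedes_appendValue_self π (by grind [h.pos]) n.zero_le⟩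
  lt_of_ascent a b hab hπ := by
    have := h.lt_of_ascent
    grind [precedes_appendValue_iff, shiftUp]
  add_two_le := h.add_two_le.trans n.le_succ
  siteBlocked w hw hws := by
    have := h.siteBlocked _ hw hws
    grind [siteBlocked_appendValue_iff_of_le, siteBlocked_appendValue_iff_of_lt]
  zero_precedes := hv ▸ precedes_appendValue_self π (hv ▸ h.pos.ne) n.zero_le
  zero_precedes_succ := by
    have := h.zero_precedes.appendValue v
    grind [shiftUp, h.pos]
  succ_precedes := hv ▸ precedes_appendValue_self π (by lia) (by grind [h.add_two_le])
  not_inversion a b hba := by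
    have := h.not_inversion
    grind [precedes_appendValue_iff, shiftUp]

theorem appendValue_bound_succ (h : IsUnsaturated π s) (hv : (v : ℕ) = s + 1) :
    IsUnsaturated (appendValue π v) (s + 1) where
  pos := s.succ_pos
  le := Nat.succ_le_succ h.le
  lt_of_siteBlocked w hw := by
    have := h.lt_of_siteBlocked
    have := h.lt_of_ascent
    have := h.not_inversion
    grind [siteBlocked_appendValue_iff_of_le, siteBlocked_appendValue_iff_of_lt]
  exists_ascent := ⟨0, v, by lia, precedes_appendValue_self π (by lia) n.zero_le⟩
  lt_of_ascent a b hab hπ := by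
    have := h.lt_of_ascent
    grind [precedes_appendValue_iff, shiftUp]
  add_two_le := Nat.succ_le_succ h.add_two_le
  siteBlocked w hw hws := by
    have := h.siteBlocked w
    have := h.zero_precedes
    grind [siteBlocked_appendValue_iff_of_le, siteBlocked_appendValue_iff_of_lt]
  zero_precedes := hv ▸ precedes_appendValue_self π (by lia) n.zero_le
  zero_precedes_succ := by
    have := h.zero_precedes_succ.appendValue v
    grind [shiftUp]
  succ_precedes := hv ▸ precedes_appendValue_self π (by lia) (by grind [h.add_two_le])
  not_inversion a b hba := by
    have := h.not_inversion
    grind [precedes_appendValue_iff, shiftUp]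

end IsUnsaturated

namespace IsVShaped

theorem siteBlocked_iff (h : IsVShaped π r) : SiteBlocked π w ↔ 0 < w ∧ w < r := by
  constructor
  · rintro ⟨a, b, c, hab, hbc, hw⟩
    rw [h.precedes_iff] at hab hbc
    grind [CompletesForbidden]
  · rintro ⟨hw, hwr⟩
    have := h.lt
    exact ⟨0, w, w + 1, (h.precedes_iff _ _).2 (by lia), (h.precedes_iff _ _).2 (by lia),
      Or.inl ⟨hw, le_rfl, w.lt_succ_self⟩⟩

theorem isConfined (h : IsVShaped π r) (hr : 0 < r) : IsConfined π r where
  pos := hr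
  le := h.lt.le
  lt_of_siteBlocked w hw := (h.siteBlocked_iff.1 hw).2
  exists_ascent := ⟨0, r, hr, (h.precedes_iff _ _).2 (by have := h.lt; lia)⟩
  lt_of_ascent a b hab hπ := by
    rw [h.precedes_iff] at hπ
    lia

theorem isSaturated_appendValue_zero (h : IsVShaped π r) (hr : 0 < r) (hv : (v : ℕ) = 0) :
    IsSaturated (appendValue π v) (r + 1) :=
  (h.isConfined hr).isSaturated_appendValue_zero hv
    fun _ hw hwr => Or.inl (h.siteBlocked_iff.2 ⟨hw, hwr⟩)

theorem isUnsaturated_appendValue (h : IsVShaped π r) (hr : 0 < r) (hv : (v : ℕ) = r) :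
    IsUnsaturated (appendValue π v) r where
  pos := hr
  le := h.lt.le.trans n.le_succ
  lt_of_siteBlocked w hw := by
    grind [siteBlocked_appendValue_iff_of_le, siteBlocked_appendValue_iff_of_lt,
      h.siteBlocked_iff, h.precedes_iff]
  exists_ascent := ⟨0, v, hv ▸ hr, precedes_appendValue_self π (by lia) n.zero_le⟩
  lt_of_ascent a b hab hπ := by
    grind [precedes_appendValue_iff, shiftUp, h.precedes_iff]
  add_two_le := by grind [h.lt]
  siteBlocked w hw hwr := by
    have := h.siteBlocked_iff.2 ⟨hw, hwr⟩
    grind [siteBlocked_appendValue_iff_of_le, siteBlocked_appendValue_iff_of_lt]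
  zero_precedes := hv ▸ precedes_appendValue_self π (hv ▸ hr.ne) n.zero_le
  zero_precedes_succ := by
    have := (h.precedes_iff 0 r).2 (by have := h.lt; lia)
    grind [shiftUp, this.appendValue v]
  succ_precedes := hv ▸ precedes_appendValue_self π (by lia) (hv ▸ h.lt)
  not_inversion a b hba := by
    grind [precedes_appendValue_iff, shiftUp, h.precedes_iff]

theorem appendValue_succ (h : IsVShaped π r) (hv : (v : ℕ) = r + 1) :
    IsVShaped (appendValue π v) (r + 1) where
  lt := Nat.succ_lt_succ h.lt
  precedes_iff x y := by
    simp only [precedes_appendValue_iff, h.precedes_iff]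
    have := h.lt
    constructor
    · grind [shiftUp]
    · rcases eq_or_ne y v with hy | hy
      · grind
      · intro hxy
        exact Or.inr ⟨if x < v then x else x - 1, if y < v then y else y - 1, by grind [shiftUp]⟩

theorem appendValue_zero (h : IsVShaped π 0) (hv : (v : ℕ) = 0) :
    IsVShaped (appendValue π v) 0 where
  lt := n.succ_pos
  precedes_iff x y := by
    simp only [precedes_appendValue_iff, h.precedes_iff]
    constructor
    · grind [shiftUp]
    · rcases eq_or_ne y v with hy | hy
      · grind
      · intro hxy
        exact Or.inr ⟨x - 1, y - 1, by grind [shiftUp]⟩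

theorem isSaturatedExcept_appendValue (h : IsVShaped π r) (hv : r + 2 ≤ v) :
    IsSaturatedExcept (appendValue π v) (r + 1) (v + 1) where
  pos := v.val.succ_pos
  le := v.isLt
  lt_of_siteBlocked w hw := by
    grind [siteBlocked_appendValue_iff_of_le, siteBlocked_appendValue_iff_of_lt,
      h.siteBlocked_iff, h.precedes_iff]
  exists_ascent := ⟨0, v, by lia, precedes_appendValue_self π (by lia) n.zero_le⟩
  lt_of_ascent a b hab hπ := by
    grind [precedes_appendValue_iff, shiftUp, h.precedes_iff]
  exception_pos := r.succ_pos
  exception_lt := by lia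
  siteBlocked_iff w hw hwv := by
    rw [siteBlocked_appendValue_iff_of_le (by lia)]
    rcases lt_trichotomy w (r + 1) with hwr | rfl | hwr
    · have hπ : Precedes π 0 r := (h.precedes_iff 0 r).2 (by lia)
      grind [h.siteBlocked_iff]
    · grind [h.siteBlocked_iff, h.precedes_iff]
    · have hπ : Precedes π (r + 1) 0 := (h.precedes_iff (r + 1) 0).2 (by lia)
      grind
  exists_inversion := by
    have := (h.precedes_iff (r + 1) 0).2 (by lia)
    exact ⟨_, _, shiftUp_lt_shiftUp_iff.2 r.succ_pos, by grind [shiftUp], this.appendValue v⟩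
  not_inversion a b hba := by
    grind [precedes_appendValue_iff, shiftUp, h.precedes_iff]
  exists_ascent_above :=
    ⟨r + 1, v, le_rfl, by lia, precedes_appendValue_self π (by lia) (by lia)⟩
  exists_ascent_across :=
    ⟨0, v, r.succ_pos, by lia, v.val.lt_succ_self, precedes_appendValue_self π (by lia) n.zero_le⟩

end IsVShaped

end Classes

section Labels

/-- The node labels of the generating tree: a class of permutations and a parameter `j`, which
is, up to a shift depending on the class, the number of sites above all blocked ones. -/
inductive Label
  | decreasing (j : ℕ)
  | vShaped (j : ℕ)
  | saturatedExcept (j : ℕ)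
  | unsaturated (j : ℕ)
  | saturated (j : ℕ)

/-- The succession rule of the generating tree: the sum of `f` over the labels of the children of
a node with the given label. -/
def Label.childSum {M : Type*} [AddCommMonoid M] (f : Label → M) : Label → M
  | decreasing j =>
    f (decreasing (j + 1)) + (f (vShaped j) + ∑ i ∈ range j, f (saturatedExcept i))
  | vShaped j =>
    f (saturated (j + 1)) +
      (f (unsaturated j) + (f (vShaped j) + ∑ i ∈ range j, f (saturatedExcept i)))
  | saturatedExcept j =>
    f (saturated j) + (f (saturatedExcept j) + ∑ i ∈ range (j + 1), f (saturated i))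
  | unsaturated j =>
    f (saturated (j + 2)) +
      (f (unsaturated (j + 1)) + (f (unsaturated j) + ∑ i ∈ range (j + 1), f (saturated i)))
  | saturated j => f (saturated j) + ∑ i ∈ range (j + 1), f (saturated i)

/-- The number of nodes at depth `d` below a node with the given label. -/
def Label.nodeCount : ℕ → Label → ℕ
  | 0, _ => 1
  | d + 1, ℓ => ℓ.childSum (nodeCount d)

variable {n j m r s : ℕ} {π : Perm (Fin n)}

/-- The permutation `π` is a node with label `ℓ`. -/
def HasLabel (π : Perm (Fin n)) : Label → Prop
  | .decreasing j => n = j + 1 ∧ IsVShaped π 0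
  | .vShaped j => ∃ r, n = r + 1 + j ∧ 0 < r ∧ IsVShaped π r
  | .saturatedExcept j => ∃ m s, n = s + j ∧ IsSaturatedExcept π m s
  | .unsaturated j => ∃ s, n = s + 2 + j ∧ IsUnsaturated π s
  | .saturated j => ∃ s, n = s + j ∧ IsSaturated π s

theorem sum_range_add_eq_of_eq_zero {M : Type*} [AddCommMonoid M] {g : ℕ → M} (hs : 0 < s)
    (hg : ∀ v, 0 < v → v < s → g v = 0) (k : ℕ) :
    ∑ v ∈ range (s + k), g v = g 0 + ∑ i ∈ range k, g (s + i) := by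
  rw [sum_range_add, sum_eq_single_of_mem 0 (mem_range.2 hs)]
  exact fun v hv hv0 => hg v (Nat.pos_of_ne_zero hv0) (mem_range.1 hv)

theorem sum_range_eq_of_reflect {M : Type*} [AddCommMonoid M] {g f : ℕ → M} {k : ℕ}
    (hg : ∀ i j, i + j + 1 = k → g i = f j) : ∑ i ∈ range k, g i = ∑ i ∈ range k, f i := by
  rw [← sum_range_reflect f]
  exact sum_congr rfl fun i hi => hg _ _ (by have := mem_range.1 hi; lia)

section SuccessionRule

variable {M : Type*} [AddCommMonoid M] {f : Label → M} {g : ℕ → M}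
  (hblocked : ∀ v, SiteBlocked π v → g v = 0)
  (hopen : ∀ (v : ℕ) (hv : v < n + 1) (ℓ : Label), ¬ SiteBlocked π v →
    HasLabel (appendValue π ⟨v, hv⟩) ℓ → g v = f ℓ)

include hopen

theorem IsVShaped.sum_appendValue_of_zero (h : IsVShaped π 0) (hn : n = j + 1) :
    ∑ v ∈ range (n + 1), g v = (Label.decreasing j).childSum f := by
  rw [Label.childSum]
  have hnot (v : ℕ) (hb : SiteBlocked π v) : False := by
    have := h.siteBlocked_iff.1 hb
    lia
  rw [show n + 1 = 1 + (1 + j) by lia, sum_range_add, sum_range_add, sum_range_one, sum_range_one]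
  congr 1
  · exact hopen 0 n.succ_pos _ (hnot 0) ⟨by lia, h.appendValue_zero rfl⟩
  congr 1
  · exact hopen 1 (by lia) _ (hnot 1) ⟨1, by lia, one_pos, h.appendValue_succ rfl⟩
  · refine sum_range_eq_of_reflect fun i k hik => ?_
    exact hopen _ (by lia) _ (hnot _)
      ⟨_, _, by lia, h.isSaturatedExcept_appendValue (by simp; lia)⟩

include hblocked

theorem IsSaturated.sum_appendValue (h : IsSaturated π s) (hn : n = s + j) :
    ∑ v ∈ range (n + 1), g v = (Label.saturated j).childSum f := by
  rw [Label.childSum]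
  rw [hn, add_assoc,
    sum_range_add_eq_of_eq_zero h.pos fun v hv hvs => hblocked v (h.siteBlocked v hv hvs)]
  congr 1
  · exact hopen 0 n.succ_pos _ (fun hb => hb.pos.false)
      ⟨s + 1, by lia, h.appendValue_zero rfl⟩
  · refine sum_range_eq_of_reflect fun i k hik => ?_
    exact hopen (s + i) (by lia) _ (fun hb => by have := h.lt_of_siteBlocked _ hb; lia)
      ⟨s + i + 1, by lia, h.appendValue_of_le (Nat.le_add_right s i)⟩

theorem IsSaturatedExcept.sum_appendValue (h : IsSaturatedExcept π m s) (hn : n = s + j) :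
    ∑ v ∈ range (n + 1), g v = (Label.saturatedExcept j).childSum f := by
  rw [Label.childSum]
  have hm : 0 < m := h.exception_pos
  have hms : m < s := h.exception_lt
  have hg (v : ℕ) (hv : v ∈ range s) (hne : v ≠ 0 ∧ v ≠ m) : g v = 0 :=
    hblocked v ((h.siteBlocked_iff v (Nat.pos_of_ne_zero hne.1) (mem_range.1 hv)).2 hne.2)
  rw [hn, add_assoc, sum_range_add, ← add_assoc,
    sum_eq_add_of_mem 0 m (by simp; lia) (by simpa) hm.ne hg]
  congr 1
  · congr 1
    · exact hopen 0 n.succ_pos _ (fun hb => hb.pos.false)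
        ⟨s + 1, by lia, h.isSaturated_appendValue_zero rfl⟩
    · exact hopen m (by lia) _ (fun hb => (h.siteBlocked_iff m hm hms).1 hb rfl)
        ⟨m, s + 1, by lia, h.appendValue_exception rfl⟩
  · refine sum_range_eq_of_reflect fun i k hik => ?_
    exact hopen (s + i) (by lia) _ (fun hb => by have := h.lt_of_siteBlocked _ hb; lia)
      ⟨s + i + 1, by lia, h.isSaturated_appendValue_of_le (Nat.le_add_right s i)⟩

theorem IsUnsaturated.sum_appendValue (h : IsUnsaturated π s) (hn : n = s + 2 + j) :
    ∑ v ∈ range (n + 1), g v = (Label.unsaturated j).childSum f := by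
  rw [Label.childSum]
  have hnot {v : ℕ} (hv : s ≤ v) (hb : SiteBlocked π v) : False :=
    (h.lt_of_siteBlocked v hb).not_ge hv
  rw [show n + 1 = s + (1 + (1 + (j + 1))) by lia,
    sum_range_add_eq_of_eq_zero h.pos fun v hv hvs => hblocked v (h.siteBlocked v hv hvs),
    sum_range_add, sum_range_add, sum_range_one, sum_range_one]
  congr 1
  · exact hopen 0 n.succ_pos _ (fun hb => hb.pos.false)
      ⟨s + 1, by lia, h.isSaturated_appendValue_zero rfl⟩
  congr 1
  · exact hopen s (by lia) _ (hnot le_rfl) ⟨s, by lia, h.appendValue_bound rfl⟩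
  congr 1
  · exact hopen (s + 1) (by lia) _ (hnot s.le_succ)
      ⟨s + 1, by lia, h.appendValue_bound_succ rfl⟩
  · refine sum_range_eq_of_reflect fun i k hik => ?_
    exact hopen _ (by lia) _ (hnot (by lia))
      ⟨_, by lia, h.isSaturated_appendValue_of_le (by simp; lia)⟩

theorem IsVShaped.sum_appendValue (h : IsVShaped π r) (hr : 0 < r) (hn : n = r + 1 + j) :
    ∑ v ∈ range (n + 1), g v = (Label.vShaped j).childSum f := by
  rw [Label.childSum]
  have hnot {v : ℕ} (hv : r ≤ v) (hb : SiteBlocked π v) : False :=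
    (h.siteBlocked_iff.1 hb).2.not_ge hv
  rw [show n + 1 = r + (1 + (1 + j)) by lia,
    sum_range_add_eq_of_eq_zero hr fun v hv hvr => hblocked v (h.siteBlocked_iff.2 ⟨hv, hvr⟩),
    sum_range_add, sum_range_add, sum_range_one, sum_range_one]
  congr 1
  · exact hopen 0 n.succ_pos _ (fun hb => hb.pos.false)
      ⟨r + 1, by lia, h.isSaturated_appendValue_zero hr rfl⟩
  congr 1
  · exact hopen r (by lia) _ (hnot le_rfl) ⟨r, by lia, h.isUnsaturated_appendValue hr rfl⟩
  congr 1
  · exact hopen (r + 1) (by lia) _ (hnot r.le_succ)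
      ⟨r + 1, by lia, r.succ_pos, h.appendValue_succ rfl⟩
  · refine sum_range_eq_of_reflect fun i k hik => ?_
    exact hopen _ (by lia) _ (hnot (by lia))
      ⟨_, _, by lia, h.isSaturatedExcept_appendValue (by simp; lia)⟩

theorem HasLabel.sum_appendValue {ℓ : Label} (h : HasLabel π ℓ) :
    ∑ v ∈ range (n + 1), g v = ℓ.childSum f := by
  cases ℓ with
  | decreasing =>
    obtain ⟨hn, h⟩ := h
    exact h.sum_appendValue_of_zero hopen hn
  | vShaped =>
    obtain ⟨r, hn, hr, h⟩ := h
    exact h.sum_appendValue hblocked hopen hr hn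
  | saturatedExcept =>
    obtain ⟨m, s, hn, h⟩ := h
    exact h.sum_appendValue hblocked hopen hn
  | unsaturated =>
    obtain ⟨s, hn, h⟩ := h
    exact h.sum_appendValue hblocked hopen hn
  | saturated =>
    obtain ⟨s, hn, h⟩ := h
    exact h.sum_appendValue hblocked hopen hn

end SuccessionRule

theorem HasLabel.descendantCount_eq {ℓ : Label} (h : HasLabel π ℓ)
    (hπ : Avoids forbiddenPatterns π) (d : ℕ) :
    descendantCount forbiddenPatterns d π = ℓ.nodeCount d := by
  induction d generalizing n ℓ with
  | zero => exact if_pos hπ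
  | succ d ih =>
    let g (v : ℕ) : ℕ :=
      if hv : v < n + 1 then descendantCount forbiddenPatterns d (appendValue π ⟨v, hv⟩) else 0
    have hblocked (v : ℕ) (hb : SiteBlocked π v) : g v = 0 := by
      refine dite_eq_right_iff.2 fun hv => descendantCount_eq_zero (fun hav => ?_) d
      exact (avoids_appendValue_iff.1 hav).2 hb
    have hopen (v : ℕ) (hv : v < n + 1) (ℓ : Label) (hb : ¬ SiteBlocked π v)
        (hℓ : HasLabel (appendValue π ⟨v, hv⟩) ℓ) : g v = ℓ.nodeCount d :=
      (dif_pos hv).trans (ih hℓ (avoids_appendValue_iff.2 ⟨hπ, hb⟩))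
    calc ∑ v, descendantCount forbiddenPatterns d (appendValue π v)
      _ = ∑ v : Fin (n + 1), g v := by simp [g, Fin.is_le]
      _ = ∑ v ∈ range (n + 1), g v := Fin.sum_univ_eq_sum_range g (n + 1)
      _ = ℓ.nodeCount (d + 1) := h.sum_appendValue hblocked hopen

theorem avoids_forbiddenPatterns_of_le_one (hn : n ≤ 1) : Avoids forbiddenPatterns π := by
  rintro σ - ⟨f, -⟩
  have := Fintype.card_le_of_embedding f.toEmbedding
  simp only [Fintype.card_fin] at this
  lia

theorem hasLabel_decreasing_zero (π : Perm (Fin 1)) : HasLabel π (.decreasing 0) := by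
  refine ⟨rfl, one_pos, fun a b => ⟨?_, by lia⟩⟩
  rintro ⟨i, j, hij, -⟩
  exact absurd (Subsingleton.elim i j) hij.ne

theorem avoiderCount_forbiddenPatterns_zero : avoiderCount forbiddenPatterns 0 = 1 := by
  rw [← sum_descendantCount _ 0 0, Fintype.sum_unique]
  exact if_pos (avoids_forbiddenPatterns_of_le_one zero_le_one)

theorem avoiderCount_forbiddenPatterns_succ (d : ℕ) :
    avoiderCount forbiddenPatterns (d + 1) = (Label.decreasing 0).nodeCount d := by
  rw [add_comm, ← sum_descendantCount _ 1 d, Fintype.sum_unique]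
  exact (hasLabel_decreasing_zero _).descendantCount_eq
    (avoids_forbiddenPatterns_of_le_one le_rfl) d

end Labels

section GeneratingFunctions

/-- The power series counting the descendants of a node with label `ℓ` by their depth. -/
noncomputable def labelGF (ℓ : Label) : PowerSeries ℚ :=
  PowerSeries.mk fun d => (ℓ.nodeCount d : ℚ)

theorem Label.map_childSum {M N : Type*} [AddCommMonoid M] [AddCommMonoid N] (φ : M →+ N)
    (f : Label → M) (ℓ : Label) : φ (ℓ.childSum f) = ℓ.childSum fun ℓ' => φ (f ℓ') := by
  cases ℓ <;> simp only [childSum, map_add, map_sum]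

theorem labelGF_eq (ℓ : Label) : labelGF ℓ = 1 + X * ℓ.childSum labelGF := by
  ext d
  cases d with
  | zero => simp [labelGF, Label.nodeCount]
  | succ d =>
    rw [map_add, coeff_succ_X_mul, coeff_one, if_neg d.succ_ne_zero, zero_add]
    calc coeff (d + 1) (labelGF ℓ)
      _ = Nat.castAddMonoidHom ℚ (ℓ.childSum (Label.nodeCount d)) := coeff_mk _ _
      _ = ℓ.childSum fun ℓ' => coeff d (labelGF ℓ') := by
        simp only [Label.map_childSum, Nat.coe_castAddMonoidHom, labelGF, coeff_mk]
      _ = coeff d (ℓ.childSum labelGF) :=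
        (ℓ.map_childSum (coeff (R := ℚ) d).toAddMonoidHom labelGF).symm

theorem avoiderGF_forbiddenPatterns :
    avoiderGF forbiddenPatterns = 1 + X * labelGF (.decreasing 0) := by
  ext d
  cases d with
  | zero => simp [avoiderGF, avoiderCount_forbiddenPatterns_zero]
  | succ d => simp [avoiderGF, labelGF, avoiderCount_forbiddenPatterns_succ, coeff_succ_X_mul]

theorem eq_zero_of_X_mul_succ_dvd {R : Type*} [CommSemiring R] {H : ℕ → PowerSeries R}
    (hH : ∀ j, X * H (j + 1) ∣ H j) (j : ℕ) : H j = 0 := by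
  have hdvd (k j : ℕ) : X ^ k ∣ H j := by
    induction k generalizing j with
    | zero => simp
    | succ k ih =>
      rw [pow_succ']
      exact (mul_dvd_mul_left X (ih (j + 1))).trans (hH j)
  ext k
  exact X_pow_dvd_iff.1 (hdvd (k + 1) j) k k.lt_succ_self

theorem one_sub_two_mul_X_ne_zero : (1 - 2 * X : PowerSeries ℚ) ≠ 0 := fun h => by
  simpa using congr(constantCoeff (R := ℚ) $h)

theorem labelGF_saturated_zero : (1 - 2 * X) * labelGF (.saturated 0) = 1 := by
  have h := labelGF_eq (.saturated 0)
  simp only [Label.childSum, zero_add, sum_range_one] at h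
  linear_combination h

theorem labelGF_saturated_succ (j : ℕ) :
    (1 - 2 * X) * labelGF (.saturated (j + 1)) = (1 - X) * labelGF (.saturated j) := by
  have h := labelGF_eq (.saturated j)
  have hsucc := labelGF_eq (.saturated (j + 1))
  simp only [Label.childSum, sum_range_succ] at h hsucc
  linear_combination hsucc - h

theorem labelGF_saturatedExcept (j : ℕ) :
    (1 - X) * labelGF (.saturatedExcept j) = labelGF (.saturated j) := by
  have hexc := labelGF_eq (.saturatedExcept j)
  have hsat := labelGF_eq (.saturated j)
  simp only [Label.childSum] at hexc hsat
  linear_combination hexc - hsat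

theorem X_mul_sum_labelGF_saturatedExcept (j : ℕ) :
    (1 - X) * (X * ∑ i ∈ range j, labelGF (.saturatedExcept i)) =
      (1 - 2 * X) * labelGF (.saturated j) - 1 := by
  have hsat := labelGF_eq (.saturated j)
  simp only [Label.childSum, sum_range_succ] at hsat
  have hsum : (1 - X) * ∑ i ∈ range j, labelGF (.saturatedExcept i) =
      ∑ i ∈ range j, labelGF (.saturated i) := by
    simp only [mul_sum, labelGF_saturatedExcept]
  linear_combination X * hsum - hsat

theorem labelGF_unsaturated (j : ℕ) :
    (1 - 3 * X) * (1 - 2 * X) * labelGF (.unsaturated j) =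
      (1 - 3 * X + 3 * X ^ 2) * labelGF (.saturated j) := by
  refine sub_eq_zero.1 (eq_zero_of_X_mul_succ_dvd (H := fun j =>
    (1 - 3 * X) * (1 - 2 * X) * labelGF (.unsaturated j) -
      (1 - 3 * X + 3 * X ^ 2) * labelGF (.saturated j)) (fun j => ?_) j)
  have hunit : IsUnit (1 - X : PowerSeries ℚ) := by simp [isUnit_iff_constantCoeff]
  rw [← hunit.dvd_mul_left]
  refine (mul_left_cancel₀ one_sub_two_mul_X_ne_zero ?_).dvd
  have hunsat := labelGF_eq (.unsaturated j)
  have hsat := labelGF_eq (.saturated j)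
  simp only [Label.childSum] at hunsat hsat
  linear_combination (1 - 2 * X) ^ 2 * (1 - 3 * X) * (hsat - hunsat) -
    (1 - 3 * X) * (1 - 2 * X) * X * labelGF_saturated_succ (j + 1) -
    ((1 - 3 * X) * (1 - X) * X + X * (1 - 3 * X + 3 * X ^ 2)) * labelGF_saturated_succ j

theorem labelGF_vShaped (j : ℕ) :
    (1 - X) ^ 2 * (1 - 3 * X) * labelGF (.vShaped j) =
      (1 - 3 * X + X ^ 2 + 3 * X ^ 3) * labelGF (.saturated j) - X * (1 - 3 * X) := by
  have h := labelGF_eq (.vShaped j)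
  simp only [Label.childSum] at h
  refine mul_left_cancel₀ one_sub_two_mul_X_ne_zero ?_
  linear_combination (1 - X) * (1 - 3 * X) * (1 - 2 * X) * h +
    X * (1 - X) * (1 - 3 * X) * labelGF_saturated_succ j + X * (1 - X) * labelGF_unsaturated j +
    (1 - 3 * X) * (1 - 2 * X) * X_mul_sum_labelGF_saturatedExcept j

theorem labelGF_decreasing (j : ℕ) :
    (1 - X) ^ 3 * (1 - 3 * X) * (1 - 3 * X + X ^ 2) * labelGF (.decreasing j) =
      (1 - X) * (1 - 2 * X) * (1 - 5 * X + 8 * X ^ 2 - 5 * X ^ 3 + 3 * X ^ 4) *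
        labelGF (.saturated j) - X * (1 - 3 * X) * (1 - 3 * X + X ^ 2) := by
  refine sub_eq_zero.1 (eq_zero_of_X_mul_succ_dvd (H := fun j =>
    (1 - X) ^ 3 * (1 - 3 * X) * (1 - 3 * X + X ^ 2) * labelGF (.decreasing j) -
      ((1 - X) * (1 - 2 * X) * (1 - 5 * X + 8 * X ^ 2 - 5 * X ^ 3 + 3 * X ^ 4) *
        labelGF (.saturated j) - X * (1 - 3 * X) * (1 - 3 * X + X ^ 2))) (fun j => ?_) j)
  refine Eq.dvd ?_
  have h := labelGF_eq (.decreasing j)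
  simp only [Label.childSum] at h
  linear_combination -(1 - X) ^ 3 * (1 - 3 * X) * (1 - 3 * X + X ^ 2) * h -
    X * (1 - X) * (1 - 3 * X + X ^ 2) * labelGF_vShaped j -
    (1 - X) ^ 2 * (1 - 3 * X) * (1 - 3 * X + X ^ 2) * X_mul_sum_labelGF_saturatedExcept j -
    X * (1 - X) * (1 - 5 * X + 8 * X ^ 2 - 5 * X ^ 3 + 3 * X ^ 4) * labelGF_saturated_succ j

end GeneratingFunctions

theorem statement_3 :
    ((1 : PowerSeries ℚ) - X)^3 * (1 - 3*X) * (1 - 3*X + X^2) * avoiderGF ({![0,2,3,1], ![1,0,3,2], ![2,3,0,1]} : Set (Fin 4 → Fin 4)) =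
      (1 - 2*X) * (1 - 6*X + 12*X^2 - 9*X^3 + 4*X^4) := by
  rw [avoiderGF_forbiddenPatterns]
  linear_combination X * labelGF_decreasing 0 +
    X * (1 - X) * (1 - 5 * X + 8 * X ^ 2 - 5 * X ^ 3 + 3 * X ^ 4) * labelGF_saturated_zero
end

section
/- Let T = {1423, 1234, 3412} (patterns of length 4). Then the generating function for T-avoiders satisfies, as formal power series over ℚ, (1-x)^7·(1-2x)^3·F_T(x) = 1 - 12x + 64x^2 - 198x^3 + 393x^4 - 521x^5 + 463x^6 - 269x^7 + 95x^8 - 17x^9; that is, F_T(x) = (1-12x+64x^2-198x^3+393x^4-521x^5+463x^6-269x^7+95x^8-17x^9)/((1-x)^7(1-2x)^3). -/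
open PowerSeries

/-!
An avoider of length `n` is built by prepending its values one at a time, from right to left, and
the number of ways to continue depends only on which first values (*active sites*) are allowed.
After prepending `v`, the active sites at or above `v` just shift up by one, while a site `s ≤ v`
survives only if every ascending pair of values `a < b` has `a < v` and, when `b < v`, also
`a < s ≤ b`. Hence after a few ascending pairs almost all lower sites die, avoiders fall into four
parametrised classes, and the class of an avoider determines those of its one-value extensions. The
generating functions of the classes are the solution of the resulting linear system, which is
rational in `x` because its sums are geometric in `1 / (1 - x)`.
-/

namespace PatternAvoidance

open Finset Equiv

section Prepend

variable {n : ℕ}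

/-- The permutation of length `n + 1` whose first value is `v` and whose remaining values are in
the same relative order as those of `π`. -/
def prepend (v : Fin (n + 1)) (π : Perm (Fin n)) : Perm (Fin (n + 1)) :=
  (finSuccEquiv n).trans (π.optionCongr.trans (finSuccEquiv' v).symm)

@[simp]
lemma prepend_zero (v : Fin (n + 1)) (π : Perm (Fin n)) : prepend v π 0 = v := by
  simp [prepend]

@[simp]
lemma prepend_succ (v : Fin (n + 1)) (π : Perm (Fin n)) (i : Fin n) :
    prepend v π i.succ = v.succAbove (π i) := by
  simp [prepend]

lemma val_prepend_succ (v : Fin (n + 1)) (π : Perm (Fin n)) (i : Fin n) :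
    (prepend v π i.succ : ℕ) = if (π i : ℕ) < v then (π i : ℕ) else π i + 1 := by
  simp only [prepend_succ, Fin.succAbove, Fin.lt_def, Fin.val_castSucc]
  split_ifs <;> rfl

lemma bijective_uncurry_prepend :
    Function.Bijective fun p : Fin (n + 1) × Perm (Fin n) ↦ prepend p.1 p.2 := by
  refine (Fintype.bijective_iff_injective_and_card _).2 ⟨?_, ?_⟩
  · rintro ⟨v, π⟩ ⟨v', π'⟩ h
    obtain rfl : v = v' := by simpa using DFunLike.congr_fun h 0
    have hπ : π = π' := Equiv.ext fun i ↦ by simpa using DFunLike.congr_fun h i.succ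
    rw [hπ]
  · simp [Fintype.card_perm, Nat.factorial_succ]

lemma containsPattern_prepend {k : ℕ} {σ : Fin k → Fin k} {π : Perm (Fin n)}
    (h : ContainsPattern π σ) (v : Fin (n + 1)) : ContainsPattern (prepend v π) σ := by
  obtain ⟨f, hf⟩ := h
  exact ⟨f.trans (Fin.succOrderEmb n), fun a b ↦ by simp [hf]⟩

end Prepend

section ExtensionCount

variable {n : ℕ} {T : Set (Fin 4 → Fin 4)}

/-- `π` contains no pattern in `T`. -/
def Avoids (T : Set (Fin 4 → Fin 4)) (π : Perm (Fin n)) : Prop :=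
  ∀ σ ∈ T, ¬ ContainsPattern π σ

lemma Avoids.of_prepend {v : Fin (n + 1)} {π : Perm (Fin n)} (h : Avoids T (prepend v π)) :
    Avoids T π :=
  fun σ hσ hπ ↦ h σ hσ (containsPattern_prepend hπ v)

lemma avoids_of_length_zero (π : Perm (Fin 0)) : Avoids T π :=
  fun _ _ ⟨f, _⟩ ↦ (f 0).elim0

open Classical in
/-- The number of ways to prepend `m` values to `π`, one after the other, so that every
intermediate permutation avoids `T`. -/
noncomputable def extensionCount (T : Set (Fin 4 → Fin 4)) : ℕ → {n : ℕ} → Perm (Fin n) → ℕ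
  | 0, _, _ => 1
  | m + 1, n, π => ∑ v : Fin (n + 1) with Avoids T (prepend v π), extensionCount T m (prepend v π)

open Classical in
lemma sum_extensionCount_succ (m : ℕ) :
    ∑ π : Perm (Fin n) with Avoids T π, extensionCount T (m + 1) π =
      ∑ π : Perm (Fin (n + 1)) with Avoids T π, extensionCount T m π := by
  simp only [extensionCount, sum_filter]
  rw [← (Equiv.ofBijective _ bijective_uncurry_prepend).sum_comp, Fintype.sum_prod_type_right]
  refine sum_congr rfl fun π _ ↦ ?_
  by_cases hπ : Avoids T π
  · simp [hπ]
  · simp [hπ, mt Avoids.of_prepend hπ]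

open Classical in
lemma sum_extensionCount (T : Set (Fin 4 → Fin 4)) (n m : ℕ) :
    ∑ π : Perm (Fin n) with Avoids T π, extensionCount T m π = avoiderCount T (n + m) := by
  induction m generalizing n with
  | zero =>
    simp only [extensionCount, sum_const, smul_eq_mul, mul_one, add_zero]
    rw [avoiderCount, Nat.card_eq_fintype_card, Fintype.card_subtype]
    congr!
  | succ m ih => rw [sum_extensionCount_succ, ih, Nat.add_right_comm, Nat.add_assoc]

lemma avoiderCount_eq_extensionCount (T : Set (Fin 4 → Fin 4)) (n : ℕ) :
    avoiderCount T n = extensionCount T n (1 : Perm (Fin 0)) := by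
  classical
  have h := sum_extensionCount T 0 n
  rw [filter_true_of_mem fun π _ ↦ avoids_of_length_zero π, zero_add,
    Fintype.sum_subsingleton _ 1] at h
  exact h.symm

end ExtensionCount

section ActiveSites

variable {n : ℕ} {π : Perm (Fin n)}

lemma containsPattern_iff_strictMono {k : ℕ} {σ τ : Fin k → Fin k}
    (hτσ : Function.LeftInverse τ σ) (hστ : Function.RightInverse τ σ) :
    ContainsPattern π σ ↔ ∃ f : Fin k ↪o Fin n, StrictMono fun a ↦ π (f (τ a)) := by
  refine exists_congr fun f ↦ ⟨fun h a b hab ↦ ?_, fun h a b ↦ ?_⟩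
  · rwa [← h, hστ, hστ]
  · simpa only [hτσ a, hτσ b] using (h.lt_iff_lt (a := σ a) (b := σ b)).symm

lemma exists_orderEmbedding_fin_four_iff {P : Fin n → Fin n → Fin n → Fin n → Prop} :
    (∃ f : Fin 4 ↪o Fin n, P (f 0) (f 1) (f 2) (f 3)) ↔
      ∃ i j k l, i < j ∧ j < k ∧ k < l ∧ P i j k l := by
  refine ⟨fun ⟨f, hf⟩ ↦ ⟨f 0, f 1, f 2, f 3, by simp [hf]⟩, ?_⟩
  rintro ⟨i, j, k, l, hij, hjk, hkl, h⟩
  have hmono : StrictMono ![i, j, k, l] := by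
    simp [Fin.strictMono_iff_lt_succ, Fin.forall_fin_succ, hij, hjk, hkl]
  exact ⟨OrderEmbedding.ofStrictMono _ hmono, h⟩

lemma containsPattern_four_iff {σ τ : Fin 4 → Fin 4}
    (hτσ : Function.LeftInverse τ σ) (hστ : Function.RightInverse τ σ) :
    ContainsPattern π σ ↔ ∃ i j k l, i < j ∧ j < k ∧ k < l ∧
      π (![i, j, k, l] (τ 0)) < π (![i, j, k, l] (τ 1)) ∧
      π (![i, j, k, l] (τ 1)) < π (![i, j, k, l] (τ 2)) ∧
      π (![i, j, k, l] (τ 2)) < π (![i, j, k, l] (τ 3)) := by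
  have hvec (f : Fin 4 ↪o Fin n) : ![f 0, f 1, f 2, f 3] = f :=
    funext fun a ↦ by fin_cases a <;> rfl
  rw [containsPattern_iff_strictMono hτσ hστ, ← exists_orderEmbedding_fin_four_iff]
  simp [hvec, Fin.strictMono_iff_lt_succ, Fin.forall_fin_succ]

/-- The patterns `1423`, `1234` and `3412`, with values counted from `0`. -/
abbrev patterns : Set (Fin 4 → Fin 4) := {![0,3,1,2], ![0,1,2,3], ![2,3,0,1]}

/-- The values `a`, `b`, `c`, `d`, read from left to right, form one of `patterns`. -/
def FormsPattern (a b c d : ℕ) : Prop :=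
  (a < c ∧ c < d ∧ d < b) ∨ (a < b ∧ b < c ∧ c < d) ∨ (c < d ∧ d < a ∧ a < b)

lemma avoids_patterns_iff :
    Avoids patterns π ↔
      ¬ ∃ i j k l, i < j ∧ j < k ∧ k < l ∧ FormsPattern (π i) (π j) (π k) (π l) := by
  have h1423 := containsPattern_four_iff (π := π) (σ := ![0,3,1,2]) (τ := ![0,2,3,1])
    (by decide) (by decide)
  have h1234 := containsPattern_four_iff (π := π) (σ := ![0,1,2,3]) (τ := ![0,1,2,3])
    (by decide) (by decide)
  have h3412 := containsPattern_four_iff (π := π) (σ := ![2,3,0,1]) (τ := ![2,3,0,1])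
    (by decide) (by decide)
  simp only [Avoids, Set.mem_insert_iff, Set.mem_singleton_iff, forall_eq_or_imp, forall_eq,
    h1423, h1234, h3412, FormsPattern, and_or_left, exists_or, not_or, Fin.lt_def]
  rfl

/-- `a < b` are values of `π`, and `a` occurs to the left of `b`. -/
def AscPair (π : Perm (Fin n)) (a b : ℕ) : Prop :=
  a < b ∧ ∃ i j : Fin n, i < j ∧ (π i : ℕ) = a ∧ (π j : ℕ) = b

/-- Prepending the value `s` to `π` creates an occurrence of `1423`, `1234` or `3412` (in the order
of the clauses) that starts with the new entry. -/
def Blocked (π : Perm (Fin n)) (s : ℕ) : Prop :=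
  ∃ i j k, i < j ∧ j < k ∧
    ((s ≤ π j ∧ (π j : ℕ) < π k ∧ (π k : ℕ) < π i) ∨ (s ≤ π i ∧ (π i : ℕ) < π j ∧ (π j : ℕ) < π k) ∨
      ((π j : ℕ) < π k ∧ π k < s ∧ s ≤ π i))

lemma exists_lt_fin_succ_iff {P : Fin (n + 1) → Fin (n + 1) → Prop} :
    (∃ i j, i < j ∧ P i j) ↔
      (∃ j : Fin n, P 0 j.succ) ∨ ∃ i j : Fin n, i < j ∧ P i.succ j.succ := by
  simp [Fin.exists_fin_succ]

lemma exists_lt_lt_fin_succ_iff {P : Fin (n + 1) → Fin (n + 1) → Fin (n + 1) → Prop} :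
    (∃ i j k, i < j ∧ j < k ∧ P i j k) ↔
      (∃ j k : Fin n, j < k ∧ P 0 j.succ k.succ) ∨
        ∃ i j k : Fin n, i < j ∧ j < k ∧ P i.succ j.succ k.succ := by
  simp [Fin.exists_fin_succ]

lemma exists_lt_lt_lt_fin_succ_iff
    {P : Fin (n + 1) → Fin (n + 1) → Fin (n + 1) → Fin (n + 1) → Prop} :
    (∃ i j k l, i < j ∧ j < k ∧ k < l ∧ P i j k l) ↔
      (∃ j k l : Fin n, j < k ∧ k < l ∧ P 0 j.succ k.succ l.succ) ∨
        ∃ i j k l : Fin n, i < j ∧ j < k ∧ k < l ∧ P i.succ j.succ k.succ l.succ := by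
  simp [Fin.exists_fin_succ]

lemma avoids_patterns_prepend_iff (hπ : Avoids patterns π) (v : Fin (n + 1)) :
    Avoids patterns (prepend v π) ↔ ¬ Blocked π v := by
  have hold : ¬ ∃ i j k l : Fin n, i < j ∧ j < k ∧ k < l ∧ FormsPattern
      (prepend v π i.succ) (prepend v π j.succ) (prepend v π k.succ) (prepend v π l.succ) := by
    convert avoids_patterns_iff.1 hπ using 12
    simp only [val_prepend_succ, FormsPattern]
    split_ifs <;> omega
  rw [avoids_patterns_iff, exists_lt_lt_lt_fin_succ_iff, or_iff_left hold, not_iff_not]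
  refine exists_congr fun i ↦ exists_congr fun j ↦ exists_congr fun k ↦
    and_congr_right' <| and_congr_right' ?_
  simp only [val_prepend_succ, prepend_zero, FormsPattern]
  split_ifs <;> omega

open Classical in
/-- The active sites of `π`: the values that can be prepended to `π` without creating a pattern. -/
noncomputable def sites (π : Perm (Fin n)) : Finset ℕ := {s ∈ range (n + 1) | ¬ Blocked π s}

lemma mem_sites {s : ℕ} : s ∈ sites π ↔ s ≤ n ∧ ¬ Blocked π s := by
  simp [sites]

lemma succ_mem_sites_prepend_iff {v : Fin (n + 1)} {t : ℕ} (ht : ↑v ≤ t) :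
    t + 1 ∈ sites (prepend v π) ↔ t ∈ sites π := by
  rw [mem_sites, mem_sites, Nat.add_le_add_iff_right, Blocked, exists_lt_lt_fin_succ_iff,
    or_iff_right]
  · refine and_congr_right' (not_congr <| exists_congr fun i ↦ exists_congr fun j ↦
      exists_congr fun k ↦ and_congr_right' <| and_congr_right' ?_)
    simp only [val_prepend_succ]
    split_ifs <;> omega
  · rintro ⟨j, k, -, h⟩
    rw [prepend_zero] at h
    omega

lemma blocked_prepend_iff_of_le {v : Fin (n + 1)} {s : ℕ} (hs : s ≤ v) :
    Blocked (prepend v π) s ↔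
      (∃ a b, AscPair π a b ∧ (v ≤ a ∨ b < v ∧ (s ≤ a ∨ b < s))) ∨ Blocked π s := by
  rw [Blocked, exists_lt_lt_fin_succ_iff]
  refine or_congr ⟨?_, ?_⟩ (exists_congr fun i ↦ exists_congr fun j ↦ exists_congr fun k ↦
    and_congr_right' <| and_congr_right' ?_)
  · rintro ⟨j, k, hjk, h⟩
    refine ⟨π j, π k, ⟨?_, j, k, hjk, rfl, rfl⟩, ?_⟩ <;>
    · simp only [val_prepend_succ, prepend_zero] at h
      split_ifs at h <;> omega
  · rintro ⟨_, _, ⟨hlt, j, k, hjk, rfl, rfl⟩, h⟩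
    refine ⟨j, k, hjk, ?_⟩
    simp only [val_prepend_succ, prepend_zero]
    split_ifs <;> omega
  · simp only [val_prepend_succ]
    split_ifs <;> omega

lemma mem_sites_prepend_iff_of_le {v : Fin (n + 1)} {s : ℕ} (hs : s ≤ v) :
    s ∈ sites (prepend v π) ↔
      s ∈ sites π ∧ ∀ a b, AscPair π a b → a < v ∧ (b < v → a < s ∧ s ≤ b) := by
  have hsn : s ≤ n := hs.trans v.is_le
  simp only [mem_sites, blocked_prepend_iff_of_le hs, hsn, hsn.trans n.le_succ, true_and, not_or,
    not_exists, not_and, not_le, not_lt, and_comm (a := ¬ Blocked π s)]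

lemma ascPair_prepend_iff {v : Fin (n + 1)} {a b : ℕ} :
    AscPair (prepend v π) a b ↔ (a = v ∧ v < b ∧ b ≤ n) ∨
      ∃ a' b', AscPair π a' b' ∧ a = (if a' < v then a' else a' + 1) ∧
        b = if b' < v then b' else b' + 1 := by
  rw [AscPair, exists_lt_fin_succ_iff, and_or_left]
  refine or_congr ⟨?_, ?_⟩ ⟨?_, ?_⟩
  · rintro ⟨hab, j, rfl, rfl⟩
    rw [prepend_zero] at hab ⊢
    omega
  · rintro ⟨rfl, hvb, hbn⟩
    refine ⟨hvb, π.symm ⟨b - 1, by omega⟩, by simp, ?_⟩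
    simp only [val_prepend_succ, apply_symm_apply]
    split_ifs <;> omega
  · rintro ⟨hab, i, j, hij, rfl, rfl⟩
    simp only [val_prepend_succ] at hab ⊢
    exact ⟨π i, π j, ⟨by split_ifs at hab <;> omega, i, j, hij, rfl, rfl⟩, rfl, rfl⟩
  · rintro ⟨_, _, ⟨hlt, i, j, hij, rfl, rfl⟩, rfl, rfl⟩
    exact ⟨by split_ifs <;> omega, i, j, hij, val_prepend_succ .., val_prepend_succ ..⟩

lemma AscPair.lt {a b : ℕ} (h : AscPair π a b) : a < b := h.1

lemma AscPair.lt_length {a b : ℕ} (h : AscPair π a b) : b < n := by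
  obtain ⟨-, -, j, -, -, rfl⟩ := h
  exact (π j).is_lt

lemma ascPair_prepend_self {v : Fin (n + 1)} {b : ℕ} (hvb : v < b) (hbn : b ≤ n) :
    AscPair (prepend v π) v b :=
  ascPair_prepend_iff.2 <| .inl ⟨rfl, hvb, hbn⟩

lemma AscPair.prepend_of_lt {v : Fin (n + 1)} {a b : ℕ} (h : AscPair π a b) (hb : b < v) :
    AscPair (prepend v π) a b :=
  ascPair_prepend_iff.2 <| .inr ⟨a, b, h, by simp [h.lt.trans hb], by simp [hb]⟩

lemma AscPair.prepend_of_le {v : Fin (n + 1)} {a b : ℕ} (h : AscPair π a b) (ha : v ≤ a) :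
    AscPair (prepend v π) (a + 1) (b + 1) :=
  ascPair_prepend_iff.2 <| .inr
    ⟨a, b, h, by simp [ha.not_gt], by simp [(ha.trans h.lt.le).not_gt]⟩

lemma card_filter_sites_prepend {v : Fin (n + 1)} {p q : ℕ → Prop} [DecidablePred p]
    [DecidablePred q] (hq : ∀ s, q s → v < s) (hpq : ∀ t, p t ↔ v ≤ t ∧ q (t + 1)) :
    #{s ∈ sites (prepend v π) | q s} = #{t ∈ sites π | p t} := by
  rw [← card_map (s := {t ∈ sites π | p t}) (addRightEmbedding 1)]
  congr 1
  ext s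
  simp only [mem_filter, mem_map, addRightEmbedding_apply]
  constructor
  · rintro ⟨hs, hqs⟩
    have hvs := hq s hqs
    obtain ⟨t, rfl⟩ : ∃ t, s = t + 1 := ⟨s - 1, by omega⟩
    have hvt : (v : ℕ) ≤ t := by omega
    exact ⟨t, ⟨(succ_mem_sites_prepend_iff hvt).1 hs, (hpq t).2 ⟨hvt, hqs⟩⟩, rfl⟩
  · rintro ⟨t, ⟨ht, hpt⟩, rfl⟩
    obtain ⟨hvt, hqt⟩ := (hpq t).1 hpt
    exact ⟨(succ_mem_sites_prepend_iff hvt).2 ht, hqt⟩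

end ActiveSites

section Labels

variable {n : ℕ} {π : Perm (Fin n)} {v : Fin (n + 1)}

/-- Every ascending pair of `π` straddles the gap between the values `w` and `w + 1`, which form
an ascending pair themselves; `w + 1` and `n` are active sites, with `p` active sites below `w + 1`
and `r` strictly between `w + 1` and `n`. -/
structure OnePivot (π : Perm (Fin n)) (w p r : ℕ) : Prop where
  ascPair : AscPair π w (w + 1)
  straddle : ∀ a b, AscPair π a b → a ≤ w ∧ w < b
  mem_sites : w + 1 ∈ sites π
  length_mem_sites : n ∈ sites π
  succ_lt_length : w + 1 < n
  card_below : #{s ∈ sites π | s ≤ w} = p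
  card_between : #{s ∈ sites π | w + 1 < s ∧ s < n} = r

/-- Every ascending pair of `π` straddles one of two gaps `z, z + 1` and `y, y + 1`, both of which
are ascending pairs themselves; `z + 1` is the smallest active site, `y + 1` is an active site, with
`m` active sites strictly between these two and `r` above `y + 1`. -/
structure TwoPivots (π : Perm (Fin n)) (z y m r : ℕ) : Prop where
  lt : z < y
  ascPair_lower : AscPair π z (z + 1)
  ascPair_upper : AscPair π y (y + 1)
  straddle : ∀ a b, AscPair π a b → (a ≤ z ∧ z < b) ∨ (a ≤ y ∧ y < b)
  lower_mem_sites : z + 1 ∈ sites π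
  upper_mem_sites : y + 1 ∈ sites π
  lt_of_mem_sites : ∀ s ∈ sites π, z < s
  card_between : #{s ∈ sites π | z + 1 < s ∧ s < y + 1} = m
  card_above : #{s ∈ sites π | y + 1 < s} = r

/-- The four classes into which avoiders fall, with the parameters that determine their
extensions. -/
inductive Label
  | decreasing (n : ℕ)
  | onePivot (p r : ℕ)
  | twoPivots (m r : ℕ)
  | aboveAscent (k : ℕ)

/-- `π` belongs to the class described by a label. In the class `aboveAscent k`, all `k` active
sites lie above some ascending pair. -/
def HasLabel (π : Perm (Fin n)) : Label → Prop
  | .decreasing k => k = n ∧ ∀ a b, ¬ AscPair π a b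
  | .onePivot p r => ∃ w, OnePivot π w p r
  | .twoPivots m r => ∃ z y, TwoPivots π z y m r
  | .aboveAscent k => #(sites π) = k ∧ ∃ a b, AscPair π a b ∧ ∀ s ∈ sites π, b < s

lemma sites_eq_range_of_forall_not_ascPair (hπ : ∀ a b, ¬ AscPair π a b) :
    sites π = range (n + 1) := by
  classical
  refine filter_true_of_mem fun s _ ⟨i, j, k, _, hjk, h⟩ ↦ ?_
  by_cases hlt : (π j : ℕ) < π k
  · exact hπ _ _ ⟨hlt, j, k, hjk, rfl, rfl⟩
  · omega

lemma onePivot_prepend_of_forall_not_ascPair (hπ : ∀ a b, ¬ AscPair π a b) (hv : v < n) :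
    OnePivot (prepend v π) v (v + 1) (n - 1 - v) := by
  have hsites := sites_eq_range_of_forall_not_ascPair hπ
  refine ⟨ascPair_prepend_self (by omega) hv, ?_, ?_, ?_, by omega, ?_, ?_⟩
  · rintro a b hab
    obtain ⟨rfl, hb, -⟩ | ⟨a', b', h, -⟩ := ascPair_prepend_iff.1 hab
    · exact ⟨le_rfl, hb⟩
    · exact absurd h (hπ a' b')
  · rw [succ_mem_sites_prepend_iff le_rfl, hsites]
    exact mem_range.2 v.is_lt
  · rw [succ_mem_sites_prepend_iff hv.le, hsites]
    exact self_mem_range_succ n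
  · rw [← card_range (v + 1)]
    congr 1
    ext s
    simp only [mem_filter, mem_range, Nat.lt_succ_iff]
    refine ⟨And.right, fun hs ↦ ⟨(mem_sites_prepend_iff_of_le hs).2 ⟨?_, fun a b h ↦ ?_⟩, hs⟩⟩
    · rw [hsites, mem_range]
      omega
    · exact absurd h (hπ a b)
  · rw [card_filter_sites_prepend (p := fun t ↦ v < t ∧ t < n) (by omega) (by omega), hsites]
    have : {t ∈ range (n + 1) | ↑v < t ∧ t < n} = Ioo (v : ℕ) n := by
      ext t
      simp only [mem_filter, mem_range, mem_Ioo]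
      omega
    rw [this, Nat.card_Ioo]
    omega

lemma not_ascPair_prepend_last (hπ : ∀ a b, ¬ AscPair π a b) (a b : ℕ) :
    ¬ AscPair (prepend (Fin.last n) π) a b := by
  rw [ascPair_prepend_iff]
  rintro (⟨-, hb, hbn⟩ | ⟨a', b', h, -⟩)
  · exact hb.not_ge hbn
  · exact hπ a' b' h

lemma hasLabel_aboveAscent_prepend {a b : ℕ} (hab : AscPair π a b) (hbv : b < v)
    (hsites : ∀ s ∈ sites (prepend v π), v < s) :
    HasLabel (prepend v π) (Label.aboveAscent #{s ∈ sites π | ↑v ≤ s}) := by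
  refine ⟨?_, a, b, hab.prepend_of_lt hbv, fun s hs ↦ hbv.trans (hsites s hs)⟩
  rw [← filter_true_of_mem hsites]
  exact card_filter_sites_prepend (fun _ h ↦ h) (by omega)

lemma filter_lt_sites_eq_insert (hn : n ∈ sites π) {k : ℕ} (hk : k < n) :
    {s ∈ sites π | k < s} = insert n {s ∈ sites π | k < s ∧ s < n} := by
  have hle : ∀ s ∈ sites π, s ≤ n := fun s hs ↦ (mem_sites.1 hs).1
  ext s
  grind

lemma card_filter_lt_sites (hn : n ∈ sites π) {k : ℕ} (hk : k < n) :
    #{s ∈ sites π | k < s} = #{s ∈ sites π | k < s ∧ s < n} + 1 := by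
  rw [filter_lt_sites_eq_insert hn hk, card_insert_of_notMem (by simp)]

namespace OnePivot

variable {w p r : ℕ}

lemma twoPivots_prepend_of_le (h : OnePivot π w p r) (hv : ↑v ∈ sites π) (hvw : v ≤ w) :
    TwoPivots (prepend v π) v (w + 1) #{s ∈ sites π | ↑v < s ∧ s ≤ w} (r + 1) := by
  have hw := h.succ_lt_length
  refine ⟨by omega, ascPair_prepend_self (by omega) (by omega), h.ascPair.prepend_of_le hvw,
    fun a b hab ↦ ?_, (succ_mem_sites_prepend_iff le_rfl).2 hv,
    (succ_mem_sites_prepend_iff (by omega)).2 h.mem_sites, fun s hs ↦ ?_, ?_, ?_⟩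
  · obtain ⟨rfl, hb, -⟩ | ⟨a', b', h', rfl, rfl⟩ := ascPair_prepend_iff.1 hab
    · exact .inl ⟨le_rfl, hb⟩
    · have := h.straddle a' b' h'
      split_ifs <;> omega
  · by_contra! hsv
    have := ((mem_sites_prepend_iff_of_le hsv).1 hs).2 _ _ h.ascPair
    omega
  · exact card_filter_sites_prepend (by omega) (by omega)
  · rw [← h.card_between, ← card_filter_lt_sites h.length_mem_sites h.succ_lt_length]
    exact card_filter_sites_prepend (by omega) (by omega)

lemma prepend_succ (h : OnePivot π w p r) (hv : (v : ℕ) = w + 1) :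
    OnePivot (prepend v π) (w + 1) (p + 1) r := by
  have hw := h.succ_lt_length
  refine ⟨hv ▸ ascPair_prepend_self (by omega) (by omega), fun a b hab ↦ ?_,
    (succ_mem_sites_prepend_iff hv.le).2 h.mem_sites,
    (succ_mem_sites_prepend_iff v.is_le).2 h.length_mem_sites, by omega, ?_, ?_⟩
  · obtain ⟨rfl, hb, -⟩ | ⟨a', b', h', rfl, rfl⟩ := ascPair_prepend_iff.1 hab
    · omega
    · have := h.straddle a' b' h'
      split_ifs <;> omega
  · have hmem {s : ℕ} (hs : s ≤ w + 1) : s ∈ sites (prepend v π) ↔ s ∈ sites π := by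
      rw [mem_sites_prepend_iff_of_le (hv ▸ hs), and_iff_left]
      intro a b hab
      have := h.straddle a b hab
      omega
    have hbelow : {s ∈ sites (prepend v π) | s ≤ w + 1} =
        insert (w + 1) {s ∈ sites π | s ≤ w} := by
      ext s
      have hw := h.mem_sites
      grind
    rw [hbelow, card_insert_of_notMem (by simp), h.card_below]
  · rw [← h.card_between]
    exact card_filter_sites_prepend (by omega) (by omega)

lemma mem_sites_prepend_iff (h : OnePivot π w p r) (hv : w + 1 < v) {s : ℕ} (hs : s ≤ v) :
    s ∈ sites (prepend v π) ↔ s = w + 1 := by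
  rw [mem_sites_prepend_iff_of_le hs]
  constructor
  · rintro ⟨-, hpair⟩
    have := hpair _ _ h.ascPair
    omega
  · rintro rfl
    refine ⟨h.mem_sites, fun a b hab ↦ ?_⟩
    have := h.straddle a b hab
    omega

lemma twoPivots_prepend_of_lt (h : OnePivot π w p r) (hv : ↑v ∈ sites π) (hwv : w + 1 < v)
    (hvn : v < n) : TwoPivots (prepend v π) w v 0 #{s ∈ sites π | ↑v < s} := by
  refine ⟨by omega, h.ascPair.prepend_of_lt hwv, ascPair_prepend_self (by omega) (by omega),
    fun a b hab ↦ ?_, (h.mem_sites_prepend_iff hwv (by omega)).2 rfl,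
    (succ_mem_sites_prepend_iff le_rfl).2 hv, fun s hs ↦ ?_, ?_, ?_⟩
  · obtain ⟨rfl, hb, -⟩ | ⟨a', b', h', rfl, rfl⟩ := ascPair_prepend_iff.1 hab
    · exact .inr ⟨le_rfl, hb⟩
    · have := h.straddle a' b' h'
      split_ifs <;> omega
  · by_contra! hsw
    have := (h.mem_sites_prepend_iff hwv (by omega)).1 hs
    omega
  · rw [card_eq_zero, filter_eq_empty_iff]
    rintro s hs ⟨hws, hsv⟩
    have := (h.mem_sites_prepend_iff hwv (by omega)).1 hs
    omega
  · exact card_filter_sites_prepend (by omega) (by omega)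

lemma prepend_last (h : OnePivot π w p r) : OnePivot (prepend (Fin.last n) π) w 0 0 := by
  have hw : w + 1 < (Fin.last n : ℕ) := h.succ_lt_length
  refine ⟨h.ascPair.prepend_of_lt hw, fun a b hab ↦ ?_,
    (h.mem_sites_prepend_iff hw hw.le).2 rfl,
    (succ_mem_sites_prepend_iff le_rfl).2 h.length_mem_sites, hw.trans n.lt_succ_self, ?_, ?_⟩
  · obtain ⟨-, hb, hbn⟩ | ⟨a', b', h', rfl, rfl⟩ := ascPair_prepend_iff.1 hab
    · exact absurd hbn hb.not_ge
    · have := h.straddle a' b' h'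
      split_ifs <;> omega
  all_goals
    rw [card_eq_zero, filter_eq_empty_iff]
    intro s hs hsw
    have := (h.mem_sites_prepend_iff hw (by rw [Fin.val_last] at *; omega)).1 hs
    omega

end OnePivot

namespace TwoPivots

variable {z y m r : ℕ}

lemma prepend_lower (h : TwoPivots π z y m r) (hv : (v : ℕ) = z + 1) :
    TwoPivots (prepend v π) (z + 1) (y + 1) m r := by
  have hzy := h.lt
  have hyn := h.ascPair_upper.lt_length
  refine ⟨by omega, hv ▸ ascPair_prepend_self (by omega) (by omega),
    h.ascPair_upper.prepend_of_le (by omega), fun a b hab ↦ ?_,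
    (succ_mem_sites_prepend_iff hv.le).2 h.lower_mem_sites,
    (succ_mem_sites_prepend_iff (by omega)).2 h.upper_mem_sites, fun s hs ↦ ?_, ?_, ?_⟩
  · obtain ⟨rfl, hb, -⟩ | ⟨a', b', h', rfl, rfl⟩ := ascPair_prepend_iff.1 hab
    · omega
    · have := h.straddle a' b' h'
      split_ifs <;> omega
  · by_contra! hsz
    have := ((mem_sites_prepend_iff_of_le (hv ▸ hsz)).1 hs).2 _ _ h.ascPair_upper
    omega
  · rw [← h.card_between]
    exact card_filter_sites_prepend (by omega) (by omega)
  · rw [← h.card_above]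
    exact card_filter_sites_prepend (by omega) (by omega)

lemma prepend_upper (h : TwoPivots π z y m r) (hv : (v : ℕ) = y + 1) :
    TwoPivots (prepend v π) z (y + 1) 0 r := by
  have hzy := h.lt
  have hyn := h.ascPair_upper.lt_length
  have hlower {s : ℕ} (hsv : s ≤ v) (hs : s ∈ sites (prepend v π)) : s = z + 1 := by
    have := ((mem_sites_prepend_iff_of_le hsv).1 hs).2 _ _ h.ascPair_lower
    omega
  refine ⟨by omega, h.ascPair_lower.prepend_of_lt (by omega),
    hv ▸ ascPair_prepend_self (by omega) (by omega), fun a b hab ↦ ?_,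
    (mem_sites_prepend_iff_of_le (by omega)).2 ⟨h.lower_mem_sites, fun a b hab ↦ ?_⟩,
    (succ_mem_sites_prepend_iff hv.le).2 h.upper_mem_sites, fun s hs ↦ ?_, ?_, ?_⟩
  · obtain ⟨rfl, hb, -⟩ | ⟨a', b', h', rfl, rfl⟩ := ascPair_prepend_iff.1 hab
    · omega
    · have := h.straddle a' b' h'
      split_ifs <;> omega
  · have := h.straddle a b hab
    omega
  · by_contra! hsz
    have := hlower (by omega) hs
    omega
  · rw [card_eq_zero, filter_eq_empty_iff]
    rintro s hs ⟨hzs, hsy⟩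
    have := hlower (by omega) hs
    omega
  · rw [← h.card_above]
    exact card_filter_sites_prepend (by omega) (by omega)

lemma hasLabel_prepend_of_ne (h : TwoPivots π z y m r) (hv : ↑v ∈ sites π) (hvz : ↑v ≠ z + 1)
    (hvy : ↑v ≠ y + 1) : HasLabel (prepend v π) (Label.aboveAscent #{s ∈ sites π | ↑v ≤ s}) := by
  have hzy := h.lt
  have hzv := h.lt_of_mem_sites v hv
  refine hasLabel_aboveAscent_prepend h.ascPair_lower (by omega) fun s hs ↦ ?_
  by_contra! hsv
  have hpair := ((mem_sites_prepend_iff_of_le hsv).1 hs).2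
  have hlower := hpair _ _ h.ascPair_lower
  have hupper := hpair _ _ h.ascPair_upper
  omega

end TwoPivots

lemma AscPair.hasLabel_prepend_of_forall_lt {a b : ℕ} (hab : AscPair π a b)
    (hb : ∀ s ∈ sites π, b < s) (hv : ↑v ∈ sites π) :
    HasLabel (prepend v π) (Label.aboveAscent #{s ∈ sites π | ↑v ≤ s}) := by
  refine hasLabel_aboveAscent_prepend hab (hb v hv) fun s hs ↦ ?_
  by_contra! hsv
  obtain ⟨hsπ, hpair⟩ := (mem_sites_prepend_iff_of_le hsv).1 hs
  exact ((hpair a b hab).2 (hb v hv)).2.not_gt (hb s hsπ)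

end Labels

section SuccessionRule

section SumByRank

variable {α M : Type*} [LinearOrder α] [AddCommMonoid M]

lemma sum_eq_sum_range_card {S : Finset α} {g : α → M} {f : ℕ → M}
    (h : ∀ v ∈ S, g v = f #{s ∈ S | v < s}) : ∑ v ∈ S, g v = ∑ j ∈ range #S, f j := by
  induction S using Finset.induction_on_min with
  | empty => simp
  | insert a S ha ih =>
    have haS : a ∉ S := fun haS ↦ (ha a haS).false
    have hmin : {s ∈ insert a S | a < s} = S := by
      rw [filter_insert, if_neg (lt_irrefl a), filter_true_of_mem ha]
    have htail : ∑ v ∈ S, g v = ∑ j ∈ range #S, f j := by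
      refine ih fun v hv ↦ ?_
      rw [h v (mem_insert_of_mem hv), filter_insert, if_neg (ha v hv).not_gt]
    rw [sum_insert haS, card_insert_of_notMem haS, sum_range_succ, htail,
      h a (mem_insert_self a S), hmin, add_comm]

lemma sum_eq_sum_lt_add_add_sum_gt {S : Finset α} {q : α} (hq : q ∈ S) (g : α → M) :
    ∑ v ∈ S, g v = ∑ v ∈ S with v < q, g v + g q + ∑ v ∈ S with q < v, g v := by
  have hdisj : Disjoint {v ∈ S | v < q} {v ∈ S | q < v} :=
    disjoint_filter.2 fun v _ hvq ↦ hvq.not_gt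
  have hunion : S.erase q = {v ∈ S | v < q} ∪ {v ∈ S | q < v} := by
    ext v
    simp only [mem_erase, mem_union, mem_filter, ne_iff_lt_or_gt, or_and_right,
      and_comm (a := v ∈ S)]
  rw [← add_sum_erase S g hq, hunion, sum_union hdisj, add_left_comm, add_assoc]

lemma card_filter_le_eq_succ {S : Finset α} {v : α} (hv : v ∈ S) :
    #{s ∈ S | v ≤ s} = #{s ∈ S | v < s} + 1 := by
  have hinsert : {s ∈ S | v ≤ s} = insert v {s ∈ S | v < s} := by
    ext s
    grind
  rw [hinsert, card_insert_of_notMem (by simp)]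

end SumByRank

variable {n : ℕ} {π : Perm (Fin n)} {M : Type*} [AddCommMonoid M] {f : Label → M} {g : ℕ → M}

/-- The succession rule: the sum of `f` over the labels of the avoiders obtained by prepending an
active site to an avoider with the given label. -/
def childSum (f : Label → M) : Label → M
  | .decreasing n => ∑ v ∈ range n, f (.onePivot (v + 1) (n - 1 - v)) + f (.decreasing (n + 1))
  | .onePivot p r =>
    ∑ j ∈ range p, f (.twoPivots j (r + 1)) + f (.onePivot (p + 1) r) +
      (∑ j ∈ range r, f (.twoPivots 0 (j + 1)) + f (.onePivot 0 0))
  | .twoPivots m r =>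
    f (.twoPivots m r) + (∑ j ∈ range m, f (.aboveAscent (j + (r + 2))) + f (.twoPivots 0 r) +
      ∑ j ∈ range r, f (.aboveAscent (j + 1)))
  | .aboveAscent k => ∑ j ∈ range k, f (.aboveAscent (j + 1))

lemma map_childSum {N : Type*} [AddCommMonoid N] (φ : M →+ N) (f : Label → M) (ℓ : Label) :
    φ (childSum f ℓ) = childSum (φ ∘ f) ℓ := by
  cases ℓ <;> simp [childSum]

lemma exists_fin_eq_of_mem_sites {s : ℕ} (hs : s ∈ sites π) : ∃ v : Fin (n + 1), ↑v = s :=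
  ⟨⟨s, Nat.lt_succ_of_le (mem_sites.1 hs).1⟩, rfl⟩

lemma TwoPivots.card_filter_le {z y m r v : ℕ} (h : TwoPivots π z y m r) (hv : v ∈ sites π)
    (hvy : v < y + 1) :
    #{s ∈ sites π | v ≤ s} = #{s ∈ sites π | v < s ∧ s < y + 1} + (r + 2) := by
  have hdisj : Disjoint {s ∈ sites π | v < s ∧ s < y + 1} {s ∈ sites π | y + 1 ≤ s} :=
    disjoint_filter.2 fun s _ hs ↦ hs.2.not_ge
  have hunion : {s ∈ sites π | v < s} =
      {s ∈ sites π | v < s ∧ s < y + 1} ∪ {s ∈ sites π | y + 1 ≤ s} := by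
    ext s
    grind
  rw [card_filter_le_eq_succ hv, hunion, card_union_of_disjoint hdisj,
    card_filter_le_eq_succ h.upper_mem_sites, h.card_above, add_assoc]

section ChildSum

variable (hg : ∀ v : Fin (n + 1), ↑v ∈ sites π → ∀ ℓ, HasLabel (prepend v π) ℓ → g v = f ℓ)

include hg

lemma sum_sites_of_forall_not_ascPair (hπ : ∀ a b, ¬ AscPair π a b) :
    ∑ v ∈ sites π, g v = childSum f (.decreasing n) := by
  have hsites := sites_eq_range_of_forall_not_ascPair hπ
  rw [hsites] at hg ⊢
  rw [sum_range_succ, childSum]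
  congr 1
  · refine sum_congr rfl fun v hv ↦ ?_
    rw [mem_range] at hv
    exact hg ⟨v, by omega⟩ (mem_range.2 <| hv.trans n.lt_succ_self) _
      ⟨v, onePivot_prepend_of_forall_not_ascPair hπ hv⟩
  · exact hg (Fin.last n) (by simp) _ ⟨rfl, not_ascPair_prepend_last hπ⟩

lemma OnePivot.sum_sites_below {w p r : ℕ} (h : OnePivot π w p r) :
    ∑ v ∈ sites π with v < w + 1, g v = ∑ j ∈ range p, f (.twoPivots j (r + 1)) := by
  simp only [Nat.lt_succ_iff]
  rw [← h.card_below]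
  refine sum_eq_sum_range_card (f := fun j ↦ f (.twoPivots j (r + 1))) fun v hv ↦ ?_
  rw [mem_filter] at hv
  obtain ⟨v, rfl⟩ := exists_fin_eq_of_mem_sites hv.1
  rw [filter_filter]
  simp only [and_comm (a := _ ≤ w)]
  exact hg v hv.1 _ ⟨_, _, h.twoPivots_prepend_of_le hv.1 hv.2⟩

lemma OnePivot.sum_sites_between {w p r : ℕ} (h : OnePivot π w p r) :
    ∑ v ∈ sites π with w + 1 < v ∧ v < n, g v = ∑ j ∈ range r, f (.twoPivots 0 (j + 1)) := by
  rw [← h.card_between]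
  refine sum_eq_sum_range_card (f := fun j ↦ f (.twoPivots 0 (j + 1))) fun v hv ↦ ?_
  rw [mem_filter] at hv
  obtain ⟨v, rfl⟩ := exists_fin_eq_of_mem_sites hv.1
  have hfilter : {s ∈ {s ∈ sites π | w + 1 < s ∧ s < n} | ↑v < s} =
      {s ∈ sites π | ↑v < s ∧ s < n} := by
    ext s
    grind
  rw [hfilter, ← card_filter_lt_sites h.length_mem_sites hv.2.2]
  exact hg v hv.1 _ ⟨_, _, h.twoPivots_prepend_of_lt hv.1 hv.2.1 hv.2.2⟩

lemma OnePivot.sum_sites {w p r : ℕ} (h : OnePivot π w p r) :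
    ∑ v ∈ sites π, g v = childSum f (.onePivot p r) := by
  have hn := h.length_mem_sites
  have hwn := h.succ_lt_length
  have hpivot : g (w + 1) = f (.onePivot (p + 1) r) :=
    hg ⟨w + 1, by omega⟩ h.mem_sites _ ⟨_, h.prepend_succ rfl⟩
  have hlast : g n = f (.onePivot 0 0) := hg (Fin.last n) hn _ ⟨_, h.prepend_last⟩
  rw [sum_eq_sum_lt_add_add_sum_gt h.mem_sites, h.sum_sites_below hg,
    filter_lt_sites_eq_insert hn hwn, sum_insert (by simp), h.sum_sites_between hg, hpivot, hlast,
    childSum, add_comm (f (.onePivot 0 0))]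

lemma TwoPivots.sum_sites_between {z y m r : ℕ} (h : TwoPivots π z y m r) :
    ∑ v ∈ sites π with z + 1 < v ∧ v < y + 1, g v =
      ∑ j ∈ range m, f (.aboveAscent (j + (r + 2))) := by
  rw [← h.card_between]
  refine sum_eq_sum_range_card (f := fun j ↦ f (.aboveAscent (j + (r + 2)))) fun v hv ↦ ?_
  rw [mem_filter] at hv
  obtain ⟨v, rfl⟩ := exists_fin_eq_of_mem_sites hv.1
  have hfilter : {s ∈ {s ∈ sites π | z + 1 < s ∧ s < y + 1} | ↑v < s} =
      {s ∈ sites π | ↑v < s ∧ s < y + 1} := by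
    ext s
    grind
  rw [hfilter, ← h.card_filter_le hv.1 hv.2.2]
  exact hg v hv.1 _ (h.hasLabel_prepend_of_ne hv.1 hv.2.1.ne' hv.2.2.ne)

lemma TwoPivots.sum_sites_above {z y m r : ℕ} (h : TwoPivots π z y m r) :
    ∑ v ∈ sites π with y + 1 < v, g v = ∑ j ∈ range r, f (.aboveAscent (j + 1)) := by
  rw [← h.card_above]
  refine sum_eq_sum_range_card (f := fun j ↦ f (.aboveAscent (j + 1))) fun v hv ↦ ?_
  rw [mem_filter] at hv
  obtain ⟨v, rfl⟩ := exists_fin_eq_of_mem_sites hv.1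
  have hfilter : {s ∈ {s ∈ sites π | y + 1 < s} | ↑v < s} = {s ∈ sites π | ↑v < s} := by
    ext s
    grind
  rw [hfilter, ← card_filter_le_eq_succ hv.1]
  exact hg v hv.1 _ (h.hasLabel_prepend_of_ne hv.1 (by have := h.lt; omega) hv.2.ne')

lemma TwoPivots.sum_sites {z y m r : ℕ} (h : TwoPivots π z y m r) :
    ∑ v ∈ sites π, g v = childSum f (.twoPivots m r) := by
  have hzy := h.lt
  have hyn := h.ascPair_upper.lt_length
  have hbelow : {v ∈ sites π | v < z + 1} = ∅ :=
    filter_false_of_mem fun v hv ↦ (h.lt_of_mem_sites v hv).not_ge ∘ Nat.le_of_lt_succ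
  have hlower : g (z + 1) = f (.twoPivots m r) :=
    hg ⟨z + 1, by omega⟩ h.lower_mem_sites _ ⟨_, _, h.prepend_lower rfl⟩
  have hupper : g (y + 1) = f (.twoPivots 0 r) :=
    hg ⟨y + 1, by omega⟩ h.upper_mem_sites _ ⟨_, _, h.prepend_upper rfl⟩
  have hupper_mem : y + 1 ∈ {v ∈ sites π | z + 1 < v} :=
    mem_filter.2 ⟨h.upper_mem_sites, by omega⟩
  have hlt_of_lt (v : ℕ) : z + 1 < v ∧ y + 1 < v ↔ y + 1 < v := by omega
  rw [sum_eq_sum_lt_add_add_sum_gt h.lower_mem_sites, hbelow, sum_empty, zero_add,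
    sum_eq_sum_lt_add_add_sum_gt hupper_mem, filter_filter, filter_filter, h.sum_sites_between hg]
  simp only [hlt_of_lt, h.sum_sites_above hg, hlower, hupper, childSum]

lemma AscPair.sum_sites {a b : ℕ} (hab : AscPair π a b) (hb : ∀ s ∈ sites π, b < s) :
    ∑ v ∈ sites π, g v = childSum f (.aboveAscent #(sites π)) := by
  refine sum_eq_sum_range_card (f := fun j ↦ f (.aboveAscent (j + 1))) fun v hv ↦ ?_
  obtain ⟨v, rfl⟩ := exists_fin_eq_of_mem_sites hv
  rw [← card_filter_le_eq_succ hv]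
  exact hg v hv _ (hab.hasLabel_prepend_of_forall_lt hb hv)

lemma HasLabel.sum_sites {ℓ : Label} (h : HasLabel π ℓ) :
    ∑ v ∈ sites π, g v = childSum f ℓ := by
  cases ℓ with
  | decreasing =>
    obtain ⟨rfl, hπ⟩ := h
    exact sum_sites_of_forall_not_ascPair hg hπ
  | onePivot =>
    obtain ⟨w, hw⟩ := h
    exact hw.sum_sites hg
  | twoPivots =>
    obtain ⟨z, y, hzy⟩ := h
    exact hzy.sum_sites hg
  | aboveAscent =>
    obtain ⟨rfl, a, b, hab, hb⟩ := h
    exact hab.sum_sites hg hb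

end ChildSum

lemma extensionCount_succ_eq_sum_sites (hπ : Avoids patterns π) (m : ℕ) :
    extensionCount patterns (m + 1) π =
      ∑ s ∈ sites π, extensionCount patterns m (prepend (Fin.ofNat (n + 1) s) π) := by
  classical
  simp only [extensionCount, avoids_patterns_prepend_iff hπ, sites, sum_filter]
  rw [← Fin.sum_univ_eq_sum_range (fun s ↦ if ¬ Blocked π s then
    extensionCount patterns m (prepend (Fin.ofNat (n + 1) s) π) else 0)]
  simp only [Fin.ofNat_eq_cast, Fin.cast_val_eq_self]

lemma extensionCount_eq_coeff {φ : Label → ℚ⟦X⟧} (hφ : ∀ ℓ, φ ℓ = 1 + X * childSum φ ℓ)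
    {ℓ : Label} (hπ : Avoids patterns π) (h : HasLabel π ℓ) (m : ℕ) :
    (extensionCount patterns m π : ℚ) = coeff m (φ ℓ) := by
  induction m generalizing n ℓ with
  | zero => simp [extensionCount, hφ ℓ]
  | succ m ih =>
    have hcoeff : coeff (m + 1) (φ ℓ) = childSum (coeff m ∘ φ) ℓ := by
      rw [hφ ℓ, map_add, coeff_succ_X_mul, coeff_one, if_neg m.succ_ne_zero, zero_add]
      exact map_childSum (coeff m).toAddMonoidHom φ ℓ
    rw [hcoeff, extensionCount_succ_eq_sum_sites hπ, Nat.cast_sum]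
    refine h.sum_sites fun v hv ℓ' hℓ' ↦ ?_
    rw [Fin.ofNat_eq_cast, Fin.cast_val_eq_self]
    exact ih ((avoids_patterns_prepend_iff hπ v).2 (mem_sites.1 hv).2) hℓ'

end SuccessionRule

section LabelGF

variable {R : Type*} [CommRing R]

/-- The part of the generating function of `onePivot p r` that does not depend on `p` and `r`. -/
def onePivotConst (x u w : R) : R := x * w * (x ^ 2 * u ^ 3 * w * (1 + x ^ 2 * u ^ 2) - u)

/-- The coefficient of `n` in the part of the generating function of `decreasing n` that is not a
multiple of `u ^ n`. -/
def decreasingSlope (x u w : R) : R := x * u * (onePivotConst x u w - x ^ 2 * u ^ 3 * w)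

/-- The generating function, by number of prepended values, of the extensions of an avoider with
the given label, where `u` and `w` stand for `1 / (1 - x)` and `1 / (1 - 2x)`. -/
def labelGF (x u w : R) : Label → R
  | .decreasing n =>
    (x * w ^ 2 * n + x ^ 2 * w ^ 2 * (w + u + u ^ 2 + x ^ 2 * u ^ 3)) * u ^ n +
      decreasingSlope x u w * n +
      u * (1 + x * decreasingSlope x u w - x ^ 2 * u ^ 3 * w -
        x ^ 2 * u ^ 2 * w * (1 + x ^ 2 * u ^ 2))
  | .onePivot p r =>
    w * u ^ (p + r + 1) + p * (x ^ 3 * w * u ^ (r + 4)) +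
      x ^ 2 * w * (1 + x ^ 2 * u ^ 2) * u ^ (r + 3) + onePivotConst x u w
  | .twoPivots m r => u ^ (m + r + 2) + x ^ 2 * w * u ^ (r + 2)
  | .aboveAscent k => u ^ k

variable {x u w : R} (hu : u * (1 - x) = 1) (hw : w * (1 - 2 * x) = 1)

section

include hu

lemma mul_sum_range_pow_succ (k : ℕ) : x * ∑ j ∈ range k, u ^ (j + 1) = u ^ k - 1 := by
  have hxu : u - 1 = x * u := by linear_combination hu
  rw [← geom_sum_mul, hxu, sum_mul, mul_sum]
  exact sum_congr rfl fun j _ ↦ by ring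

lemma mul_sum_range_pow_add (a k : ℕ) :
    x * ∑ j ∈ range k, u ^ (j + (a + 1)) = u ^ (k + a) - u ^ a := by
  have hpow (j : ℕ) : u ^ (j + (a + 1)) = u ^ (j + 1) * u ^ a := by ring
  simp only [hpow, ← sum_mul]
  linear_combination u ^ a * mul_sum_range_pow_succ hu k

lemma sq_mul_sum_range_mul_pow (n : ℕ) :
    x ^ 2 * ∑ v ∈ range n, ((v + 1 : ℕ) : R) * u ^ (n - 1 - v + 1) = u ^ n - 1 - n * x := by
  induction n with
  | zero => simp
  | succ n ih =>
    have hgeom := mul_sum_range_pow_succ hu n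
    rw [← sum_range_reflect] at hgeom
    have hshift : ∑ k ∈ range n, ((k + 1 + 1 : ℕ) : R) * u ^ (n + 1 - 1 - (k + 1) + 1) =
        ∑ v ∈ range n, ((v + 1 : ℕ) : R) * u ^ (n - 1 - v + 1) +
          ∑ v ∈ range n, u ^ (n - 1 - v + 1) := by
      rw [← sum_add_distrib]
      refine sum_congr rfl fun v _ ↦ ?_
      rw [show n + 1 - 1 - (v + 1) = n - 1 - v by omega]
      push_cast
      ring
    rw [sum_range_succ', hshift]
    push_cast at ih ⊢
    linear_combination ih + x * hgeom - u ^ n * (1 + x) * hu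

lemma mul_sum_labelGF_onePivot (n : ℕ) :
    x * ∑ v ∈ range n, labelGF x u w (.onePivot (v + 1) (n - 1 - v)) =
      n * (x * w * u ^ (n + 1)) + x ^ 2 * w * u ^ 3 * (u ^ n - 1 - n * x) +
        x ^ 2 * w * (1 + x ^ 2 * u ^ 2) * u ^ 2 * (u ^ n - 1) + n * (x * onePivotConst x u w) := by
  have hgeom := mul_sum_range_pow_succ hu n
  rw [← sum_range_reflect] at hgeom
  have hterm : ∀ v ∈ range n, labelGF x u w (.onePivot (v + 1) (n - 1 - v)) =
      w * u ^ (n + 1) + x ^ 3 * w * u ^ 3 * ((v + 1 : ℕ) * u ^ (n - 1 - v + 1)) +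
        x ^ 2 * w * (1 + x ^ 2 * u ^ 2) * u ^ 2 * u ^ (n - 1 - v + 1) +
        onePivotConst x u w := by
    intro v hv
    rw [mem_range] at hv
    rw [labelGF, show v + 1 + (n - 1 - v) + 1 = n + 1 by omega]
    ring
  rw [sum_congr rfl hterm]
  simp only [sum_add_distrib, ← mul_sum, sum_const, card_range, nsmul_eq_mul]
  linear_combination x ^ 2 * w * u ^ 3 * sq_mul_sum_range_mul_pow hu n +
    x ^ 2 * w * (1 + x ^ 2 * u ^ 2) * u ^ 2 * hgeom

lemma labelGF_aboveAscent (k : ℕ) :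
    labelGF x u w (.aboveAscent k) = 1 + x * childSum (labelGF x u w) (.aboveAscent k) := by
  simp only [childSum, labelGF, mul_sum_range_pow_succ hu, add_sub_cancel]

end

include hu hw

lemma labelGF_twoPivots_zero (r : ℕ) : labelGF x u w (.twoPivots 0 r) = w * u ^ r := by
  simp only [labelGF, zero_add, pow_add]
  grind

lemma labelGF_twoPivots (m r : ℕ) :
    labelGF x u w (.twoPivots m r) = 1 + x * childSum (labelGF x u w) (.twoPivots m r) := by
  have hbetween : x * ∑ j ∈ range m, labelGF x u w (.aboveAscent (j + (r + 2))) =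
      u ^ (m + (r + 1)) - u ^ (r + 1) := mul_sum_range_pow_add hu (r + 1) m
  have habove : x * ∑ j ∈ range r, labelGF x u w (.aboveAscent (j + 1)) = u ^ r - 1 :=
    mul_sum_range_pow_succ hu r
  simp only [childSum, mul_add, hbetween, habove, labelGF_twoPivots_zero hu hw]
  simp only [labelGF, pow_add]
  clear hbetween habove
  generalize u ^ m = a
  generalize u ^ r = b
  grind

lemma labelGF_onePivot (p r : ℕ) :
    labelGF x u w (.onePivot p r) = 1 + x * childSum (labelGF x u w) (.onePivot p r) := by
  have hbelow : x * ∑ j ∈ range p, labelGF x u w (.twoPivots j (r + 1)) =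
      u ^ (p + (r + 2)) - u ^ (r + 2) + p * (x ^ 3 * w * u ^ (r + 3)) := by
    rw [← mul_sum_range_pow_add hu]
    simp only [labelGF, sum_add_distrib, sum_const, card_range, nsmul_eq_mul, add_assoc]
    ring
  have hbetween : x * ∑ j ∈ range r, labelGF x u w (.twoPivots 0 (j + 1)) = w * (u ^ r - 1) := by
    simp only [labelGF_twoPivots_zero hu hw, ← mul_sum]
    rw [mul_left_comm, mul_sum_range_pow_succ hu]
  simp only [childSum, mul_add, hbelow, hbetween]
  simp only [labelGF, onePivotConst, pow_add, Nat.cast_add, Nat.cast_one, Nat.cast_zero]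
  clear hbelow hbetween
  generalize u ^ p = a
  generalize u ^ r = b
  generalize (p : R) = p
  grind

lemma labelGF_decreasing (n : ℕ) :
    labelGF x u w (.decreasing n) = 1 + x * childSum (labelGF x u w) (.decreasing n) := by
  rw [childSum, mul_add, mul_sum_labelGF_onePivot hu]
  simp only [labelGF, decreasingSlope, onePivotConst, pow_succ u n, Nat.cast_add, Nat.cast_one]
  generalize u ^ n = a
  generalize (n : R) = n
  grind

lemma labelGF_eq_one_add_mul_childSum (ℓ : Label) :
    labelGF x u w ℓ = 1 + x * childSum (labelGF x u w) ℓ := by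
  cases ℓ with
  | decreasing n => exact labelGF_decreasing hu hw n
  | onePivot p r => exact labelGF_onePivot hu hw p r
  | twoPivots m r => exact labelGF_twoPivots hu hw m r
  | aboveAscent k => exact labelGF_aboveAscent hu k

lemma mul_labelGF_decreasing_zero :
    (1 - x) ^ 7 * (1 - 2 * x) ^ 3 * labelGF x u w (.decreasing 0) =
      1 - 12 * x + 64 * x ^ 2 - 198 * x ^ 3 + 393 * x ^ 4 - 521 * x ^ 5 + 463 * x ^ 6 -
        269 * x ^ 7 + 95 * x ^ 8 - 17 * x ^ 9 := by
  simp only [labelGF, decreasingSlope, onePivotConst]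
  grind

end LabelGF

lemma avoiderGF_patterns_eq_labelGF {u w : ℚ⟦X⟧} (hu : u * (1 - X) = 1) (hw : w * (1 - 2 * X) = 1) :
    avoiderGF patterns = labelGF X u w (.decreasing 0) := by
  have hlabel : HasLabel (1 : Perm (Fin 0)) (.decreasing 0) :=
    ⟨rfl, fun _ _ hab ↦ absurd hab.lt_length (Nat.not_lt_zero _)⟩
  ext n
  rw [avoiderGF, coeff_mk, avoiderCount_eq_extensionCount]
  exact extensionCount_eq_coeff (labelGF_eq_one_add_mul_childSum hu hw)
    (avoids_of_length_zero 1) hlabel n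

end PatternAvoidance

theorem statement_4 :
    ((1 : PowerSeries ℚ) - X)^7 * (1 - 2*X)^3 * avoiderGF ({![0,3,1,2], ![0,1,2,3], ![2,3,0,1]} : Set (Fin 4 → Fin 4)) =
      1 - 12*X + 64*X^2 - 198*X^3 + 393*X^4 - 521*X^5 + 463*X^6 - 269*X^7 + 95*X^8 - 17*X^9 := by
  have hu : (1 - X : ℚ⟦X⟧)⁻¹ * (1 - X) = 1 := PowerSeries.inv_mul_cancel _ (by simp)
  have hw : (1 - 2 * X : ℚ⟦X⟧)⁻¹ * (1 - 2 * X) = 1 := PowerSeries.inv_mul_cancel _ (by simp)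
  rw [PatternAvoidance.avoiderGF_patterns_eq_labelGF hu hw,
    PatternAvoidance.mul_labelGF_decreasing_zero hu hw]
end

section
/- Let T = {1342, 2143, 2314} (patterns of length 4). Then the generating function for T-avoiders satisfies, as formal power series over ℚ, (1 - 6x + 11x^2 - 7x^3)·F_T(x) = (1-2x)·(1-3x+x^2); that is, F_T(x) = (1-2x)(1-3x+x^2)/(1-6x+11x^2-7x^3). -/
open PowerSeries

/-!
Split an avoider `v r` at its first letter. Let `i` letters of `r` lie below `v` and `j` above.

* If all letters above `v` precede all letters below `v`, then the upper part avoids 231 and 2143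
  and the lower part is an arbitrary avoider.
* Otherwise `r` is *mixed*. A first letter of `r` above `v` must then be the maximum, and deleting
  it leaves a mixed word with `j - 1` upper letters. If the first letter of `r` is below `v`, the
  upper letters form an increasing block `c` and `r = x c y`. For `j = 1` the letter `v` is
  redundant; for `j ≥ 2` the condition becomes that every letter of `x` exceeds every letter of
  `y`, that `x` avoids 231 and 2143, and that `y` is an avoider, so the count does not depend
  on `j`.

The same splitting shows that the avoiders of 231 and 2143 have the generating function
`(1 - 2x) / (1 - 3x + x²)`, and the resulting linear system gives `F`.
-/

section Sublists

variable {α : Type*}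

open List

theorem pair_sublist_append_iff {a b : α} {l m : List α} :
    [a, b] <+ l ++ m ↔ [a, b] <+ l ∨ (a ∈ l ∧ b ∈ m) ∨ [a, b] <+ m := by
  induction l with
  | nil => simp
  | cons x l ih =>
    simp only [cons_append, cons_sublist_cons', ih, singleton_sublist, mem_append, mem_cons]
    grind

theorem triple_sublist_append_iff {a b c : α} {l m : List α} :
    [a, b, c] <+ l ++ m ↔
      [a, b, c] <+ l ∨ ([a, b] <+ l ∧ c ∈ m) ∨ (a ∈ l ∧ [b, c] <+ m) ∨ [a, b, c] <+ m := by
  induction l with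
  | nil => simp
  | cons x l ih =>
    simp only [cons_append, cons_sublist_cons' (a := a), ih, pair_sublist_append_iff,
      singleton_sublist, mem_cons]
    grind

theorem quadruple_sublist_append_iff {a b c d : α} {l m : List α} :
    [a, b, c, d] <+ l ++ m ↔
      [a, b, c, d] <+ l ∨ ([a, b, c] <+ l ∧ d ∈ m) ∨ ([a, b] <+ l ∧ [c, d] <+ m) ∨
        (a ∈ l ∧ [b, c, d] <+ m) ∨ [a, b, c, d] <+ m := by
  induction l with
  | nil => simp
  | cons x l ih =>
    simp only [cons_append, cons_sublist_cons' (a := a), ih, triple_sublist_append_iff,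
      singleton_sublist, mem_cons]
    grind

theorem mem_of_pair_sublist {a b : α} {l : List α} (h : [a, b] <+ l) : a ∈ l ∧ b ∈ l := by
  simpa using h.subset

theorem mem_of_triple_sublist {a b c : α} {l : List α} (h : [a, b, c] <+ l) :
    a ∈ l ∧ b ∈ l ∧ c ∈ l := by
  simpa using h.subset

theorem pair_sublists_of_triple_sublist {a b c : α} {l : List α} (h : [a, b, c] <+ l) :
    [a, b] <+ l ∧ [a, c] <+ l ∧ [b, c] <+ l := by
  refine ⟨.trans ?_ h, .trans ?_ h, .trans ?_ h⟩ <;> simp [List.sublist_cons_iff]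

theorem triple_sublists_of_quadruple_sublist {a b c d : α} {l : List α} (h : [a, b, c, d] <+ l) :
    [a, b, c] <+ l ∧ [a, b, d] <+ l ∧ [a, c, d] <+ l ∧ [b, c, d] <+ l := by
  refine ⟨.trans ?_ h, .trans ?_ h, .trans ?_ h, .trans ?_ h⟩ <;> simp [List.sublist_cons_iff]

theorem exists_append_of_pair_sublist_imp {p : α → Prop} {l : List α}
    (h : ∀ a b, [a, b] <+ l → p b → p a) :
    ∃ u w, l = u ++ w ∧ (∀ a ∈ u, p a) ∧ ∀ a ∈ w, ¬ p a := by
  induction l with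
  | nil => exact ⟨[], [], by simp⟩
  | cons x l ih =>
    by_cases hx : p x
    · obtain ⟨u, w, rfl, hu, hw⟩ := ih fun a b hab ↦ h a b (hab.cons x)
      exact ⟨x :: u, w, rfl, by simpa [hx] using hu, hw⟩
    · refine ⟨[], x :: l, rfl, by simp, ?_⟩
      intro a ha hpa
      obtain rfl | ha := List.mem_cons.1 ha
      · exact hx hpa
      · exact hx (h x a (by simpa using ha) hpa)

theorem eq_and_eq_of_append_append_eq {p : α → Prop} {c x x' y y' : List α} (hne : c ≠ [])
    (hc : ∀ a ∈ c, ¬ p a) (hx : ∀ a ∈ x, p a) (hx' : ∀ a ∈ x', p a)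
    (h : x ++ (c ++ y) = x' ++ (c ++ y')) : x = x' ∧ y = y' := by
  classical
  obtain ⟨b, c, rfl⟩ := exists_cons_of_ne_nil hne
  have hb : ¬ p b := hc b mem_cons_self
  have hxx' := congrArg (takeWhile (p ·)) h
  rw [takeWhile_append_of_pos (l₁ := x) (by simpa using hx),
    takeWhile_append_of_pos (l₁ := x') (by simpa using hx')] at hxx'
  obtain rfl : x = x' := by simpa [hb] using hxx'
  exact ⟨rfl, by simpa using h⟩

end Sublists

section Patterns

open List

variable {α β : Type*} [LinearOrder α] [LinearOrder β] {l : List α}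

/-- The word `l` contains the pattern `σ`: some subword `g 0, …, g (k - 1)` of `l` is in the same
relative order as `σ`. This is `ContainsPattern` for words over an arbitrary linear order. -/
def WordContains {k : ℕ} (σ : Fin k → Fin k) (l : List α) : Prop :=
  ∃ g : Fin k → α, List.ofFn g <+ l ∧ ∀ a b, σ a < σ b ↔ g a < g b

theorem wordContains_map_iff {k : ℕ} {σ : Fin k → Fin k} (e : α ↪o β) :
    WordContains σ (l.map e) ↔ WordContains σ l := by
  constructor
  · rintro ⟨g, hg, hσ⟩
    choose f hf using fun i ↦ List.mem_map.1 (hg.subset (List.mem_ofFn.2 ⟨i, rfl⟩))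
    obtain rfl : e ∘ f = g := funext fun i ↦ (hf i).2
    obtain ⟨l', hl', hf'⟩ := sublist_map_iff.1 hg
    rw [← map_ofFn] at hf'
    exact ⟨f, e.injective.list_map hf' ▸ hl', by simpa using hσ⟩
  · rintro ⟨g, hg, hσ⟩
    exact ⟨e ∘ g, by simpa [List.map_ofFn] using hg.map e, by simpa using hσ⟩

theorem wordContains_iff_exists_strictMono {k : ℕ} {σ τ : Fin k → Fin k}
    (hστ : Function.LeftInverse σ τ) (hτσ : Function.RightInverse σ τ) :
    WordContains σ l ↔ ∃ g, List.ofFn g <+ l ∧ StrictMono (g ∘ τ) := by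
  refine exists_congr fun g ↦ and_congr_right fun _ ↦ ⟨fun h a b hab ↦ ?_, fun h a b ↦ ?_⟩
  · rw [Function.comp_apply, Function.comp_apply, ← h, hστ, hστ]
    exact hab
  · rw [← h.lt_iff_lt, Function.comp_apply, Function.comp_apply, hτσ, hτσ]

theorem wordContains_231_iff :
    WordContains ![1, 2, 0] l ↔ ∃ a b c, [a, b, c] <+ l ∧ c < a ∧ a < b := by
  rw [wordContains_iff_exists_strictMono (τ := ![2, 0, 1]) (by decide) (by decide),
    ← FinVec.exists_iff]
  simp [FinVec.Exists, Fin.strictMono_iff_lt_succ, Fin.forall_fin_succ]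

theorem wordContains_1342_iff :
    WordContains ![0, 2, 3, 1] l ↔ ∃ a b c d, [a, b, c, d] <+ l ∧ a < d ∧ d < b ∧ b < c := by
  rw [wordContains_iff_exists_strictMono (τ := ![0, 3, 1, 2]) (by decide) (by decide),
    ← FinVec.exists_iff]
  simp [FinVec.Exists, Fin.strictMono_iff_lt_succ, Fin.forall_fin_succ]

theorem wordContains_2143_iff :
    WordContains ![1, 0, 3, 2] l ↔ ∃ a b c d, [a, b, c, d] <+ l ∧ b < a ∧ a < d ∧ d < c := by
  rw [wordContains_iff_exists_strictMono (τ := ![1, 0, 3, 2]) (by decide) (by decide),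
    ← FinVec.exists_iff]
  simp [FinVec.Exists, Fin.strictMono_iff_lt_succ, Fin.forall_fin_succ]

theorem wordContains_2314_iff :
    WordContains ![1, 2, 0, 3] l ↔ ∃ a b c d, [a, b, c, d] <+ l ∧ c < a ∧ a < b ∧ b < d := by
  rw [wordContains_iff_exists_strictMono (τ := ![2, 0, 1, 3]) (by decide) (by decide),
    ← FinVec.exists_iff]
  simp [FinVec.Exists, Fin.strictMono_iff_lt_succ, Fin.forall_fin_succ]

/-- Avoidance of the three patterns 1342, 2143 and 2314. -/
def AvoidsTriple (l : List α) : Prop :=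
  ∀ σ ∈ ({![0, 2, 3, 1], ![1, 0, 3, 2], ![1, 2, 0, 3]} : Set (Fin 4 → Fin 4)), ¬ WordContains σ l

/-- Avoidance of the two patterns 231 and 2143, the condition that a new smallest first letter
turns into `AvoidsTriple`. -/
def AvoidsPair (l : List α) : Prop :=
  ¬ WordContains ![1, 2, 0] l ∧ ¬ WordContains ![1, 0, 3, 2] l

theorem avoidsTriple_iff :
    AvoidsTriple l ↔ ∀ a b c d, [a, b, c, d] <+ l →
      ¬ (a < d ∧ d < b ∧ b < c) ∧ ¬ (b < a ∧ a < d ∧ d < c) ∧ ¬ (c < a ∧ a < b ∧ b < d) := by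
  simp only [AvoidsTriple, Set.forall_mem_insert, Set.mem_singleton_iff, forall_eq,
    wordContains_1342_iff, wordContains_2143_iff, wordContains_2314_iff]
  grind

theorem avoidsPair_iff :
    AvoidsPair l ↔ (∀ a b c, [a, b, c] <+ l → ¬ (c < a ∧ a < b)) ∧
      ∀ a b c d, [a, b, c, d] <+ l → ¬ (b < a ∧ a < d ∧ d < c) := by
  simp only [AvoidsPair, wordContains_231_iff, wordContains_2143_iff]
  grind

end Patterns

section Structure

open List

variable {α : Type*} [LinearOrder α] {l m r u w x c y : List α} {v z b M : α}

theorem AvoidsTriple.of_sublist (hm : AvoidsTriple m) (h : l <+ m) : AvoidsTriple l :=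
  avoidsTriple_iff.2 fun a b c d hs ↦ avoidsTriple_iff.1 hm a b c d (hs.trans h)

theorem AvoidsPair.of_sublist (hm : AvoidsPair m) (h : l <+ m) : AvoidsPair l :=
  avoidsPair_iff.2 ⟨fun a b c hs ↦ (avoidsPair_iff.1 hm).1 a b c (hs.trans h),
    fun a b c d hs ↦ (avoidsPair_iff.1 hm).2 a b c d (hs.trans h)⟩

theorem AvoidsPair.avoidsTriple (h : AvoidsPair l) : AvoidsTriple l := by
  rw [avoidsTriple_iff]
  rw [avoidsPair_iff] at h
  intro a b c d hs
  have := triple_sublists_of_quadruple_sublist hs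
  grind

theorem avoidsTriple_cons_iff :
    AvoidsTriple (v :: r) ↔ AvoidsTriple r ∧ ∀ b c d, [b, c, d] <+ r →
      ¬ (v < d ∧ d < b ∧ b < c) ∧ ¬ (b < v ∧ v < d ∧ d < c) ∧ ¬ (c < v ∧ v < b ∧ b < d) := by
  simp only [avoidsTriple_iff, cons_sublist_cons' (a := _)]
  grind

theorem avoidsPair_cons_iff :
    AvoidsPair (v :: r) ↔ AvoidsPair r ∧ (∀ b c, [b, c] <+ r → ¬ (c < v ∧ v < b)) ∧
      ∀ b c d, [b, c, d] <+ r → ¬ (b < v ∧ v < d ∧ d < c) := by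
  simp only [avoidsPair_iff, cons_sublist_cons' (a := _)]
  grind

theorem avoidsTriple_append_iff_of_lt (hlm : ∀ a ∈ l, ∀ b ∈ m, b < a) :
    AvoidsTriple (l ++ m) ↔ AvoidsTriple l ∧ AvoidsTriple m := by
  refine ⟨fun h ↦ ⟨h.of_sublist (sublist_append_left l m),
    h.of_sublist (sublist_append_right l m)⟩, fun ⟨hl, hm⟩ ↦ ?_⟩
  rw [avoidsTriple_iff] at *
  simp only [quadruple_sublist_append_iff]
  rintro a b c d (h | ⟨h, hd⟩ | ⟨hab, hcd⟩ | ⟨ha, h⟩ | h) <;>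
    grind [mem_of_pair_sublist, mem_of_triple_sublist]

theorem avoidsTriple_cons_iff_avoidsPair (hu : ∀ a ∈ u, v < a) :
    AvoidsTriple (v :: u) ↔ AvoidsPair u := by
  rw [avoidsTriple_cons_iff]
  constructor
  · rintro ⟨h, hcons⟩
    rw [avoidsTriple_iff] at h
    exact avoidsPair_iff.2 ⟨fun b c d hs ⟨hdb, hbc⟩ ↦
      (hcons b c d hs).1 ⟨hu d (mem_of_triple_sublist hs).2.2, hdb, hbc⟩,
      fun a b c d hs ↦ (h a b c d hs).2.1⟩
  · intro h
    refine ⟨h.avoidsTriple, ?_⟩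
    rw [avoidsPair_iff] at h
    grind [mem_of_triple_sublist]

theorem avoidsTriple_cons_append_iff (hu : ∀ a ∈ u, v < a) (hw : ∀ a ∈ w, a < v) :
    AvoidsTriple (v :: (u ++ w)) ↔ AvoidsPair u ∧ AvoidsTriple w := by
  rw [← cons_append, avoidsTriple_append_iff_of_lt (by grind),
    avoidsTriple_cons_iff_avoidsPair hu]

theorem avoidsTriple_cons_iff_of_subsingleton (hr : ∀ a ∈ r, ∀ b ∈ r, v < a → v < b → a = b) :
    AvoidsTriple (v :: r) ↔ AvoidsTriple r := by
  refine avoidsTriple_cons_iff.trans (and_iff_left fun b c d hs ↦ ?_)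
  have := mem_of_triple_sublist hs
  grind

theorem avoidsTriple_cons_cons_iff_of_max (hv : v < z) (hr : ∀ a ∈ r, a < z) :
    AvoidsTriple (v :: z :: r) ↔ AvoidsTriple (v :: r) := by
  refine ⟨fun h ↦ h.of_sublist (by simp), fun h ↦ avoidsTriple_cons_iff.2
    ⟨avoidsTriple_cons_iff.2 ⟨h.of_sublist (by simp), fun b c d hs ↦ ?_⟩, fun b c d hs ↦ ?_⟩⟩
  · have := mem_of_triple_sublist hs
    grind
  · obtain hbcd | ⟨rfl, hcd⟩ := cons_sublist_cons'.1 hs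
    · exact (avoidsTriple_cons_iff.1 h).2 b c d hbcd
    · have := mem_of_pair_sublist hcd
      grind

/-- Some letter of `r` below `v` precedes a letter above `v`. -/
def Mixed (v : α) (r : List α) : Prop :=
  ∃ a b, [a, b] <+ r ∧ a < v ∧ v < b

theorem forall_lt_of_mixed (h : AvoidsTriple (v :: z :: r)) (hv : v < z) (hz : z ∉ r)
    (hr : Mixed v r) : ∀ t ∈ r, t < z := by
  obtain ⟨a, b, hab, hav, hvb⟩ := hr
  obtain ⟨p, q, rfl, ha, hb⟩ := cons_sublist_iff.1 hab
  rw [singleton_sublist] at hb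
  have hcons := (avoidsTriple_cons_iff.1 h).2 z
  have hbz : b < z := by
    have := hcons a b (by simpa using hab)
    grind
  intro t ht
  rcases mem_append.1 ht with ht | ht
  · have := hcons t b (by simp [pair_sublist_append_iff, ht, hb])
    grind
  · have := hcons a t (by simp [pair_sublist_append_iff, ha, ht])
    grind

theorem mixed_cons_iff_of_lt (hv : v < z) : Mixed v (z :: r) ↔ Mixed v r := by
  simp only [Mixed, cons_sublist_cons']
  grind

theorem mixed_cons_of_lt (hz : z < v) (hb : b ∈ r) (hvb : v < b) : Mixed v (z :: r) :=
  ⟨z, b, by simpa using hb, hz, hvb⟩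

theorem mixed_and_head?_ne_max_iff (h : AvoidsTriple (v :: r)) (hr : (v :: r).Nodup)
    (hv : v < M) (hM : M ∈ r) (hmax : ∀ a ∈ r, a ≤ M) :
    Mixed v r ∧ r.head? ≠ some M ↔ ∃ z ∈ r.head?, z < v := by
  obtain ⟨z, r, rfl⟩ := exists_cons_of_ne_nil (ne_nil_of_mem hM)
  simp only [head?_cons, ne_eq, Option.some.injEq, Option.mem_def, exists_eq_left']
  constructor
  · rintro ⟨hmixed, hzM⟩
    by_contra hzv
    have hvz : v < z := lt_of_le_of_ne (not_lt.1 hzv) (by grind)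
    have hMz := forall_lt_of_mixed h hvz (by grind) ((mixed_cons_iff_of_lt hvz).1 hmixed) M
      (by grind)
    exact hMz.not_ge (hmax z mem_cons_self)
  · intro hzv
    have hzM : z ≠ M := (hzv.trans hv).ne
    exact ⟨mixed_cons_of_lt hzv (by grind) hv, hzM⟩

theorem avoidsPair_cons_iff_of_forall_lt (hr : ∀ a ∈ r, v < a) :
    AvoidsPair (v :: r) ↔ AvoidsPair r := by
  refine avoidsPair_cons_iff.trans (and_iff_left ⟨fun b c hs ↦ ?_, fun b c d hs ↦ ?_⟩)
  · have := mem_of_pair_sublist hs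
    grind
  · have := mem_of_triple_sublist hs
    grind

theorem avoidsPair_append_iff (hxc : ∀ a ∈ x, ∀ b ∈ c, a < b) (hc : c.Pairwise (· < ·)) :
    AvoidsPair (x ++ c) ↔ AvoidsPair x := by
  refine ⟨fun h ↦ h.of_sublist (sublist_append_left x c), fun h ↦ ?_⟩
  have hc : ∀ {a b}, [a, b] <+ c → a < b := pairwise_iff_forall_sublist.1 hc
  obtain ⟨h231, h2143⟩ := avoidsPair_iff.1 h
  refine avoidsPair_iff.2 ⟨fun a b d hs ↦ ?_, fun a b d e hs ↦ ?_⟩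
  · rcases triple_sublist_append_iff.1 hs with h | ⟨h, hd⟩ | ⟨ha, h⟩ | h
    · exact h231 a b d h
    · have := mem_of_pair_sublist h
      grind
    · have := mem_of_pair_sublist h
      grind
    · have := hc (pair_sublists_of_triple_sublist h).2.1
      grind
  · rcases quadruple_sublist_append_iff.1 hs with h | ⟨h, he⟩ | ⟨-, hde⟩ | ⟨ha, h⟩ | h
    · exact h2143 a b d e h
    · have := mem_of_triple_sublist h
      grind
    · have := hc hde
      grind
    · have := mem_of_triple_sublist h
      grind
    · have := hc (pair_sublists_of_triple_sublist (triple_sublists_of_quadruple_sublist h).1).1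
      grind

theorem avoidsPair_cons_append_iff (hx : ∀ a ∈ x, a < v) (hvc : ∀ a ∈ c, v < a)
    (hc : c.Pairwise (· < ·)) : AvoidsPair (v :: (x ++ c)) ↔ AvoidsPair x := by
  rw [avoidsPair_cons_iff, avoidsPair_append_iff (by grind) hc, and_iff_left]
  refine ⟨fun a b hs ↦ ?_, fun a b d hs ↦ ?_⟩
  · have := pair_sublist_append_iff.1 hs
    grind [mem_of_pair_sublist]
  · have hs := pair_sublist_append_iff.1 (pair_sublists_of_triple_sublist hs).2.2
    have hc : ∀ {a b}, [a, b] <+ c → a < b := pairwise_iff_forall_sublist.1 hc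
    grind [mem_of_pair_sublist]

theorem exists_append_of_avoidsPair_cons (h : AvoidsPair (v :: r)) (hr : (v :: r).Nodup)
    (hlow : ∃ a ∈ r, a < v) :
    ∃ x c, r = x ++ c ∧ (∀ a ∈ x, a < v) ∧ (∀ a ∈ c, v < a) ∧ c.Pairwise (· < ·) := by
  obtain ⟨-, h231, h2143⟩ := avoidsPair_cons_iff.1 h
  obtain ⟨x, c, rfl, hx, hc⟩ := exists_append_of_pair_sublist_imp (p := (· < v)) (l := r)
    fun a b hs hb ↦ by
      have := mem_of_pair_sublist hs
      have := h231 a b hs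
      grind
  refine ⟨x, c, rfl, hx, by grind, ?_⟩
  obtain ⟨a, ha, hav⟩ := hlow
  have hax : a ∈ x := by grind
  refine pairwise_iff_forall_sublist.2 fun {p q} hs ↦ ?_
  have := h2143 a p q (by simp [triple_sublist_append_iff, hax, hs])
  have : p ≠ q := pairwise_iff_forall_sublist.1 (by grind : c.Nodup) hs
  have := mem_of_pair_sublist hs
  grind

theorem lt_of_avoidsTriple_cons_cons (h : AvoidsTriple (v :: z :: r)) (hz : z < v)
    (hr : r.Nodup) {a b : α} (hab : [a, b] <+ r) (hvb : v < b) : a < b := by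
  have := (avoidsTriple_cons_iff.1 h).2 z a b (by simpa using hab)
  have : a ≠ b := pairwise_iff_forall_sublist.1 hr hab
  grind

theorem lt_of_triple_sublist_of_avoidsTriple_cons_cons (h : AvoidsTriple (v :: z :: r)) (hz : z < v)
    (hr : (v :: r).Nodup) {a b c : α} (habc : [a, b, c] <+ r) (hva : v < a) (hvc : v < c) :
    v < b := by
  have hac : a < c := lt_of_avoidsTriple_cons_cons h hz (nodup_cons.1 hr).2
    (pair_sublists_of_triple_sublist habc).2.1 hvc
  have hbv : b ≠ v :=
    ne_of_mem_of_not_mem (mem_of_triple_sublist habc).2.1 (nodup_cons.1 hr).1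
  exact hbv.lt_or_gt.resolve_left fun hbv ↦
    ((avoidsTriple_cons_iff.1 h).2 a b c (habc.cons z)).2.2 ⟨hbv, hva, hac⟩

theorem exists_append_of_avoidsTriple_cons_cons (h : AvoidsTriple (v :: z :: r)) (hz : z < v)
    (hr : (v :: r).Nodup) :
    ∃ x c y, z :: r = x ++ (c ++ y) ∧ x ≠ [] ∧ (∀ a ∈ x, a < v) ∧ (∀ a ∈ c, v < a) ∧
      c.Pairwise (· < ·) ∧ ∀ a ∈ y, a < v := by
  have hne : ∀ a ∈ r, a ≠ v := fun a ha ↦ ne_of_mem_of_not_mem ha (nodup_cons.1 hr).1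
  obtain ⟨x, s, rfl, hx, hs⟩ : ∃ x s, r = x ++ s ∧ (∀ a ∈ x, a < v) ∧ ∀ t ∈ s.head?, ¬ t < v :=
    ⟨r.takeWhile (· < v), r.dropWhile (· < v), by simp,
      fun a ha ↦ by simpa using mem_takeWhile_imp ha,
      fun t ht ↦ by simpa [Option.mem_def.1 ht] using head?_dropWhile_not (· < v) r⟩
  obtain ⟨c, y, rfl, hc, hy⟩ := exists_append_of_pair_sublist_imp (p := (v < ·)) (l := s)
    fun a b hab hvb ↦ by
      obtain ⟨t, s, rfl⟩ := exists_cons_of_ne_nil (ne_nil_of_mem (mem_of_pair_sublist hab).1)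
      have hvt : v < t := (hne t (by simp)).lt_or_gt.resolve_left (hs t rfl)
      obtain hab | ⟨rfl, -⟩ := cons_sublist_cons'.1 hab
      · exact lt_of_triple_sublist_of_avoidsTriple_cons_cons h hz hr (a := t) (b := a) (c := b)
          (by simp [hab]) hvt hvb
      · exact hvt
  refine ⟨z :: x, c, y, rfl, cons_ne_nil z x, forall_mem_cons.2 ⟨hz, hx⟩, hc, ?_,
    fun a ha ↦ (hne a (by simp [ha])).lt_or_gt.resolve_right (hy a ha)⟩
  refine pairwise_iff_forall_sublist.2 fun {a b} hab ↦ lt_of_avoidsTriple_cons_cons h hz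
    (nodup_cons.1 hr).2 (hab.trans (by simp)) (hc b (mem_of_pair_sublist hab).2)

theorem avoidsPair_of_avoidsTriple_append_singleton (h : AvoidsTriple (x ++ [z]))
    (hx : ∀ a ∈ x, a < z) : AvoidsPair x := by
  rw [avoidsTriple_iff] at h
  exact avoidsPair_iff.2 ⟨fun a b c hs ⟨hca, hab⟩ ↦ (h a b c z (hs.append_right [z])).2.2
    ⟨hca, hab, hx b (mem_of_triple_sublist hs).2.1⟩,
    fun a b c d hs ↦ (h a b c d (hs.trans (sublist_append_left x [z]))).2.1⟩

theorem avoidsTriple_cons_append_append_iff (hx : ∀ a ∈ x, a < v) (hvc : ∀ a ∈ c, v < a)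
    (hc : c.Pairwise (· < ·)) (hlen : 2 ≤ c.length) (hy : ∀ a ∈ y, a < v) (hxy : x.Disjoint y) :
    AvoidsTriple (v :: (x ++ (c ++ y))) ↔
      (∀ a ∈ x, ∀ b ∈ y, b < a) ∧ AvoidsPair x ∧ AvoidsTriple y := by
  constructor
  · intro h
    obtain ⟨p, q, s, rfl⟩ : ∃ p q s, c = p :: q :: s := by
      match c, hlen with
      | p :: q :: s, _ => exact ⟨p, q, s, rfl⟩
    have hvp : v < p := hvc p mem_cons_self
    have hpq : p < q := (pairwise_cons.1 hc).1 q mem_cons_self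
    have hyr : y <+ x ++ (p :: q :: s ++ y) :=
      (sublist_append_right _ y).trans (sublist_append_right x _)
    refine ⟨fun a ha b hb ↦ ?_, ?_, h.of_sublist (hyr.cons v)⟩
    · have hapqb : [a, p, q, b] <+ v :: (x ++ (p :: q :: s ++ y)) := by
        simp [cons_sublist_cons', quadruple_sublist_append_iff, ha, hb]
      refine lt_of_le_of_ne (not_lt.1 fun hab ↦ ?_) fun hba ↦ hxy ha (hba ▸ hb)
      exact (avoidsTriple_iff.1 h a p q b hapqb).1 ⟨hab, (hy b hb).trans hvp, hpq⟩
    · exact avoidsPair_of_avoidsTriple_append_singleton (z := p) (h.of_sublist (by simp))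
        fun a ha ↦ (hx a ha).trans hvp
  · rintro ⟨hyx, hxp, hyt⟩
    have hskew : ∀ a ∈ v :: (x ++ c), ∀ b ∈ y, b < a := by grind
    have := (avoidsTriple_append_iff_of_lt hskew).2
      ⟨((avoidsPair_cons_append_iff hx hvc hc).2 hxp).avoidsTriple, hyt⟩
    simpa using this

end Structure

section Arrangements

variable {α β : Type*}

/-- The word `l` lists every element of `S` exactly once. -/
def IsArrangement (l : List α) (S : Finset α) : Prop :=
  l.Nodup ∧ ∀ a, a ∈ l ↔ a ∈ S

open Classical in
/-- The finite set of arrangements of `S` with the property `P`. -/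
noncomputable def arrangements (S : Finset α) (P : List α → Prop) : Finset (List α) :=
  {l ∈ S.val.lists.toFinset | P l}

theorem mem_arrangements {S : Finset α} {P : List α → Prop} {l : List α} :
    l ∈ arrangements S P ↔ IsArrangement l S ∧ P l := by
  classical
  rw [arrangements, Finset.mem_filter, Multiset.mem_toFinset, Multiset.mem_lists_iff]
  refine and_congr_left' ⟨fun h ↦ ?_, fun ⟨hl, hS⟩ ↦ ?_⟩
  · exact ⟨by simpa [h] using S.nodup, fun a ↦ by simp [← Finset.mem_val, h]⟩
  · exact (Multiset.Nodup.ext S.nodup (Multiset.coe_nodup.2 hl)).2 fun a ↦ by simp [hS]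

theorem arrangements_congr {S : Finset α} {P Q : List α → Prop}
    (h : ∀ l, IsArrangement l S → (P l ↔ Q l)) : arrangements S P = arrangements S Q := by
  ext l
  rw [mem_arrangements, mem_arrangements]
  exact and_congr_right (h l)

theorem IsArrangement.length_eq {S : Finset α} {l : List α} (h : IsArrangement l S) :
    l.length = S.card := by
  classical
  rw [← List.toFinset_card_of_nodup h.1]
  congr 1
  ext a
  simp [h.2]

theorem IsArrangement.nodup_cons {S : Finset α} {v : α} {l : List α} (h : IsArrangement l S)
    (hv : v ∉ S) : (v :: l).Nodup :=
  List.nodup_cons.2 ⟨(h.2 v).not.2 hv, h.1⟩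

theorem isArrangement_cons_iff [DecidableEq α] {S : Finset α} {v : α} {l : List α} :
    IsArrangement (v :: l) S ↔ v ∈ S ∧ IsArrangement l (S.erase v) := by
  simp only [IsArrangement, List.nodup_cons, List.mem_cons, Finset.mem_erase]
  grind

theorem isArrangement_append_iff [DecidableEq α] {S T : Finset α} {l m : List α}
    (hST : Disjoint S T) (hl : ∀ a ∈ l, a ∉ T) (hm : ∀ a ∈ m, a ∉ S) :
    IsArrangement (l ++ m) (S ∪ T) ↔ IsArrangement l S ∧ IsArrangement m T := by
  rw [Finset.disjoint_left] at hST
  simp only [IsArrangement, List.nodup_append, List.mem_append, Finset.mem_union]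
  grind

theorem isArrangement_map_iff {S : Finset α} (e : α ↪ β) {l : List α} :
    IsArrangement (l.map e) (S.map e) ↔ IsArrangement l S := by
  simp only [IsArrangement, List.nodup_map_iff e.injective, List.mem_map, Finset.mem_map]
  refine and_congr_right' ⟨fun h a ↦ ?_, fun h b ↦ by simp only [h]⟩
  simpa using h (e a)

theorem card_arrangements_map (S : Finset α) (e : α ↪ β) (P : List β → Prop) :
    (arrangements (S.map e) P).card = (arrangements S fun l ↦ P (l.map e)).card := by
  symm
  refine Finset.card_nbij (List.map e) (fun l hl ↦ ?_) (e.injective.list_map.injOn) fun l hl ↦ ?_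
  · simpa [mem_arrangements, isArrangement_map_iff] using hl
  · obtain ⟨harr, hP⟩ := mem_arrangements.1 hl
    obtain ⟨l, rfl⟩ : l ∈ Set.range (List.map e) := by
      rw [Set.range_list_map]
      intro b hb
      obtain ⟨a, -, rfl⟩ := Finset.mem_map.1 ((harr.2 b).1 hb)
      exact ⟨a, rfl⟩
    exact ⟨l, mem_arrangements.2 ⟨(isArrangement_map_iff e).1 harr, hP⟩, rfl⟩

theorem isArrangement_sort [LinearOrder α] (S : Finset α) : IsArrangement S.sort S :=
  ⟨S.sort_nodup _, fun _ ↦ S.mem_sort _⟩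

theorem IsArrangement.eq_sort [LinearOrder α] {S : Finset α} {l : List α} (h : IsArrangement l S)
    (hl : l.Pairwise (· < ·)) : l = S.sort := by
  classical
  have hS : l.toFinset = S := by
    ext a
    simp [h.2]
  rw [← hS, eq_comm, List.toFinset_sort _ h.1]
  exact hl.imp le_of_lt

theorem card_arrangements_head_eq [DecidableEq α] {S : Finset α} {P : List α → Prop} {v : α}
    (hv : v ∈ S) : (arrangements S fun l ↦ P l ∧ l.head? = some v).card =
      (arrangements (S.erase v) fun r ↦ P (v :: r)).card := by
  symm
  refine Finset.card_nbij (List.cons v) (fun r hr ↦ ?_) (List.cons_injective.injOn) fun l hl ↦ ?_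
  · obtain ⟨harr, hP⟩ := mem_arrangements.1 hr
    exact mem_arrangements.2 ⟨isArrangement_cons_iff.2 ⟨hv, harr⟩, hP, rfl⟩
  · obtain ⟨harr, hP, hhead⟩ := mem_arrangements.1 hl
    obtain ⟨r, rfl⟩ := List.head?_eq_some_iff.1 hhead
    exact ⟨r, mem_arrangements.2 ⟨(isArrangement_cons_iff.1 harr).2, hP⟩, rfl⟩

theorem card_arrangements_eq_add [DecidableEq α] {S : Finset α} (P : List α → Prop) {v : α}
    (hv : v ∈ S) :
    (arrangements S P).card = (arrangements (S.erase v) fun r ↦ P (v :: r)).card +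
      (arrangements S fun l ↦ P l ∧ l.head? ≠ some v).card := by
  classical
  rw [← card_arrangements_head_eq hv,
    ← Finset.card_filter_add_card_filter_not fun l : List α ↦ l.head? = some v]
  congr 2 <;> · ext; simp [mem_arrangements, and_assoc]

theorem card_arrangements_eq_sum [DecidableEq α] {S : Finset α} (P : List α → Prop)
    (hS : S.Nonempty) :
    (arrangements S P).card = ∑ v ∈ S, (arrangements (S.erase v) fun r ↦ P (v :: r)).card := by
  classical
  have hmaps : ∀ l ∈ arrangements S P, l.head? ∈ S.map .some := fun l hl ↦ by
    have harr := (mem_arrangements.1 hl).1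
    obtain ⟨a, ha⟩ := hS
    obtain ⟨v, r, rfl⟩ := List.exists_cons_of_ne_nil (List.ne_nil_of_mem ((harr.2 a).2 ha))
    simpa using (harr.2 v).1 (by simp)
  rw [Finset.card_eq_sum_card_fiberwise hmaps, Finset.sum_map]
  refine Finset.sum_congr rfl fun v hv ↦ ?_
  rw [← card_arrangements_head_eq hv]
  congr 1
  ext
  simp [mem_arrangements, and_assoc]

end Arrangements

section Counting

open Finset

theorem avoidsTriple_map_iff {α β : Type*} [LinearOrder α] [LinearOrder β] (e : α ↪o β)
    {l : List α} : AvoidsTriple (l.map e) ↔ AvoidsTriple l := by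
  simp only [AvoidsTriple, wordContains_map_iff]

theorem avoidsPair_map_iff {α β : Type*} [LinearOrder α] [LinearOrder β] (e : α ↪o β)
    {l : List α} : AvoidsPair (l.map e) ↔ AvoidsPair l := by
  simp only [AvoidsPair, wordContains_map_iff]

/-- The number of arrangements of `n` letters avoiding 1342, 2143 and 2314. -/
noncomputable def tripleCount (n : ℕ) : ℕ :=
  #(arrangements (univ : Finset (Fin n)) AvoidsTriple)

/-- The number of arrangements of `n` letters avoiding 231 and 2143. -/
noncomputable def pairCount (n : ℕ) : ℕ :=
  #(arrangements (univ : Finset (Fin n)) AvoidsPair)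

variable {α : Type*} [LinearOrder α]

theorem card_arrangements_avoidsTriple (S : Finset α) :
    #(arrangements S AvoidsTriple) = tripleCount #S := by
  conv_lhs => rw [← map_orderEmbOfFin_univ S rfl, card_arrangements_map]
  exact congrArg card (arrangements_congr fun l _ ↦ avoidsTriple_map_iff (S.orderEmbOfFin rfl))

theorem card_arrangements_avoidsPair (S : Finset α) :
    #(arrangements S AvoidsPair) = pairCount #S := by
  conv_lhs => rw [← map_orderEmbOfFin_univ S rfl, card_arrangements_map]
  exact congrArg card (arrangements_congr fun l _ ↦ avoidsPair_map_iff (S.orderEmbOfFin rfl))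

theorem tripleCount_zero : tripleCount 0 = 1 := by
  rw [tripleCount, card_eq_one]
  refine ⟨[], ?_⟩
  ext l
  simp [mem_arrangements, IsArrangement, Subsingleton.elim l [], avoidsTriple_iff]

theorem pairCount_zero : pairCount 0 = 1 := by
  rw [pairCount, card_eq_one]
  refine ⟨[], ?_⟩
  ext l
  simp [mem_arrangements, IsArrangement, Subsingleton.elim l [], avoidsPair_iff]

variable {L U : Finset α} {v : α}

theorem card_arrangements_avoidsPair_cons_of_forall_lt (hU : ∀ a ∈ U, v < a) :
    #(arrangements U fun r ↦ AvoidsPair (v :: r)) = pairCount #U := by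
  rw [← card_arrangements_avoidsPair]
  exact congrArg card (arrangements_congr fun r hr ↦
    avoidsPair_cons_iff_of_forall_lt fun a ha ↦ hU a ((hr.2 a).1 ha))

theorem card_arrangements_avoidsPair_cons (hL : ∀ a ∈ L, a < v) (hU : ∀ a ∈ U, v < a)
    (hne : L.Nonempty) :
    #(arrangements (L ∪ U) fun r ↦ AvoidsPair (v :: r)) = pairCount #L := by
  rw [← card_arrangements_avoidsPair]
  symm
  have hLU : Disjoint L U := disjoint_left.2 fun a ha ha' ↦ (hL a ha).asymm (hU a ha')
  have hUsort : ∀ a ∈ U.sort, v < a := by simpa using hU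
  refine card_nbij (· ++ U.sort) (fun x hx ↦ ?_) ((List.append_left_injective _).injOn)
    fun r hr ↦ ?_
  · obtain ⟨harr, hP⟩ := mem_arrangements.1 hx
    have hxv : ∀ a ∈ x, a < v := fun a ha ↦ hL a ((harr.2 a).1 ha)
    exact mem_arrangements.2 ⟨(isArrangement_append_iff hLU (by grind) (by grind)).2
      ⟨harr, isArrangement_sort U⟩,
      (avoidsPair_cons_append_iff hxv hUsort U.sortedLT_sort.pairwise).2 hP⟩
  · obtain ⟨harr, hP⟩ := mem_arrangements.1 hr
    have hlow : ∃ a ∈ r, a < v := hne.imp fun a ha ↦ ⟨(harr.2 a).2 (by simp [ha]), hL a ha⟩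
    obtain ⟨x, c, rfl, hx, hc, hinc⟩ :=
      exists_append_of_avoidsPair_cons hP (harr.nodup_cons (by grind)) hlow
    obtain ⟨harrx, harrc⟩ := (isArrangement_append_iff hLU (by grind) (by grind)).1 harr
    exact ⟨x, mem_arrangements.2 ⟨harrx, (avoidsPair_cons_append_iff hx hc hinc).1 hP⟩,
      by rw [harrc.eq_sort hinc]⟩

theorem card_arrangements_not_mixed (hL : ∀ a ∈ L, a < v) (hU : ∀ a ∈ U, v < a) :
    #(arrangements (L ∪ U) fun r ↦ AvoidsTriple (v :: r) ∧ ¬ Mixed v r) =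
      pairCount #U * tripleCount #L := by
  rw [← card_arrangements_avoidsPair, ← card_arrangements_avoidsTriple, ← card_product]
  symm
  have hUL : Disjoint U L := disjoint_left.2 fun a ha ha' ↦ (hU a ha).asymm (hL a ha')
  refine card_nbij (fun s ↦ s.1 ++ s.2) (fun s hs ↦ ?_) (fun s hs t ht hst ↦ ?_) fun r hr ↦ ?_
  · obtain ⟨u, w⟩ := s
    obtain ⟨⟨hu, hPu⟩, hw, hPw⟩ := by simpa [mem_arrangements] using hs
    have huv : ∀ a ∈ u, v < a := fun a ha ↦ hU a ((hu.2 a).1 ha)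
    have hwv : ∀ a ∈ w, a < v := fun a ha ↦ hL a ((hw.2 a).1 ha)
    refine mem_arrangements.2 ⟨?_, (avoidsTriple_cons_append_iff huv hwv).2 ⟨hPu, hPw⟩, ?_⟩
    · rw [union_comm]
      exact (isArrangement_append_iff hUL (by grind) (by grind)).2 ⟨hu, hw⟩
    · rintro ⟨a, b, hab, hav, hvb⟩
      grind [pair_sublist_append_iff, mem_of_pair_sublist]
  · simp only [coe_product, Set.mem_prod, mem_coe, mem_arrangements] at hs ht
    exact Prod.ext_iff.2 (List.append_inj hst (hs.1.1.length_eq.trans ht.1.1.length_eq.symm))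
  · obtain ⟨harr, hP, hmixed⟩ := mem_arrangements.1 hr
    obtain ⟨u, w, rfl, hu, hw⟩ := exists_append_of_pair_sublist_imp (p := (v < ·)) (l := r)
      fun a b hab hvb ↦ by
        have := (harr.2 a).1 (mem_of_pair_sublist hab).1
        by_contra hva
        exact hmixed ⟨a, b, hab, by grind, hvb⟩
    have hwv : ∀ a ∈ w, a < v := fun a ha ↦ by
      have := (harr.2 a).1 (List.mem_append_right u ha)
      grind
    rw [union_comm, isArrangement_append_iff hUL (by grind) (by grind)] at harr
    rw [avoidsTriple_cons_append_iff hu hwv] at hP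
    exact ⟨(u, w), by simp [mem_arrangements, *], rfl⟩

end Counting

section MixedWords

open Finset

variable {α : Type*} [LinearOrder α] {L U : Finset α} {v M : α}

/-- The arrangements of `S` that can follow the first letter `v` of an avoider and in which some
letter below `v` precedes some letter above `v`. -/
noncomputable def mixedWords (v : α) (S : Finset α) : Finset (List α) :=
  arrangements S fun r ↦ AvoidsTriple (v :: r) ∧ Mixed v r

/-- The arrangements of `S` that can follow the first letter `v` of an avoider and that start with
a letter below `v`. -/
noncomputable def descentWords (v : α) (S : Finset α) : Finset (List α) :=
  arrangements S fun r ↦ AvoidsTriple (v :: r) ∧ ∃ z ∈ r.head?, z < v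

theorem mixedWords_eq_empty (hL : ∀ a ∈ L, a < v) : mixedWords v L = ∅ := by
  refine eq_empty_of_forall_notMem fun r hr ↦ ?_
  obtain ⟨harr, -, a, b, hab, -, hvb⟩ := mem_arrangements.1 hr
  exact hvb.asymm (hL b ((harr.2 b).1 (mem_of_pair_sublist hab).2))

theorem card_mixedWords_insert (hL : ∀ a ∈ L, a < v) (hU : ∀ a ∈ U, v < a ∧ a < M)
    (hv : v < M) :
    #(mixedWords v (L ∪ insert M U)) =
      #(mixedWords v (L ∪ U)) + #(descentWords v (L ∪ insert M U)) := by
  have hmem : M ∈ L ∪ insert M U := by simp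
  have herase : (L ∪ insert M U).erase M = L ∪ U := by
    ext a
    grind
  rw [mixedWords, card_arrangements_eq_add _ hmem, herase]
  congr 2
  · refine arrangements_congr fun r hr ↦ ?_
    have hrM : ∀ a ∈ r, a < M := fun a ha ↦ by
      have := (hr.2 a).1 ha
      grind
    rw [avoidsTriple_cons_cons_iff_of_max hv hrM, mixed_cons_iff_of_lt hv]
  · refine arrangements_congr fun r hr ↦ ?_
    rw [and_assoc, and_congr_right_iff]
    intro h
    refine mixed_and_head?_ne_max_iff h (hr.nodup_cons (by grind)) hv ((hr.2 M).2 hmem)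
      fun a ha ↦ ?_
    have := (hr.2 a).1 ha
    grind

theorem card_descentWords_insert_singleton (hL : ∀ a ∈ L, a < v) (hv : v < M) :
    #(descentWords v (insert M L)) + tripleCount #L = tripleCount (#L + 1) := by
  have hM : M ∉ L := fun h ↦ (hv.trans (hL M h)).false
  rw [← card_insert_of_notMem hM, ← card_arrangements_avoidsTriple,
    ← card_arrangements_avoidsTriple, card_arrangements_eq_add _ (mem_insert_self M L),
    erase_insert hM, add_comm]
  congr 2
  · refine arrangements_congr fun r hr ↦ ?_
    rw [avoidsTriple_cons_iff_of_subsingleton]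
    have := hr.2
    grind
  · refine arrangements_congr fun r hr ↦ ?_
    have hne : r ≠ [] := List.ne_nil_of_mem ((hr.2 M).2 (mem_insert_self M L))
    obtain ⟨z, r, rfl⟩ := List.exists_cons_of_ne_nil hne
    have hz : z = M ∨ z < v := by
      have := (hr.2 z).1 (by simp)
      grind
    rw [avoidsTriple_cons_iff_of_subsingleton]
    · simp only [List.head?_cons, ne_eq, Option.some.injEq, Option.mem_def, exists_eq_left']
      grind
    · have := hr.2
      grind

theorem append_mem_descentWords (hL : ∀ a ∈ L, a < v) (hU : ∀ a ∈ U, v < a) (hcard : 2 ≤ #U)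
    {a : α} (ha : a ∈ L) {x y : List α} (hx : x ∈ arrangements {b ∈ L | a ≤ b} AvoidsPair)
    (hy : y ∈ arrangements {b ∈ L | b < a} AvoidsTriple) :
    x ++ (U.sort ++ y) ∈ descentWords v (L ∪ U) := by
  obtain ⟨⟨hxnodup, hxmem⟩, hxP⟩ := mem_arrangements.1 hx
  obtain ⟨⟨hynodup, hymem⟩, hyP⟩ := mem_arrangements.1 hy
  simp only [mem_filter] at hxmem hymem
  refine mem_arrangements.2 ⟨⟨?_, fun b ↦ ?_⟩, ?_, ?_⟩
  · simp only [List.nodup_append, sort_nodup, List.mem_append, mem_sort]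
    grind
  · simp only [List.mem_append, mem_sort, mem_union]
    grind
  · refine (avoidsTriple_cons_append_append_iff (by grind) (by simpa using hU)
      U.sortedLT_sort.pairwise (by simpa using hcard) (by grind) ?_).2 ⟨by grind, hxP, hyP⟩
    exact fun b hbx hby ↦ ((hxmem b).1 hbx).2.not_gt ((hymem b).1 hby).2
  · have hne : x ≠ [] := List.ne_nil_of_mem ((hxmem a).2 ⟨ha, le_rfl⟩)
    obtain ⟨z, x, rfl⟩ := List.exists_cons_of_ne_nil hne
    exact ⟨z, by simp, hL z ((hxmem z).1 (by simp)).1⟩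

theorem exists_append_of_mem_descentWords (hL : ∀ a ∈ L, a < v) (hU : ∀ a ∈ U, v < a)
    (hcard : 2 ≤ #U) {r : List α} (hr : r ∈ descentWords v (L ∪ U)) :
    ∃ a ∈ L, ∃ x ∈ arrangements {b ∈ L | a ≤ b} AvoidsPair,
      ∃ y ∈ arrangements {b ∈ L | b < a} AvoidsTriple, x ++ (U.sort ++ y) = r := by
  obtain ⟨harr, hP, z, hzr, hzv⟩ := mem_arrangements.1 hr
  obtain ⟨r, rfl⟩ := List.head?_eq_some_iff.1 hzr
  have hnodup := harr.nodup_cons (v := v) (by grind)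
  obtain ⟨x, c, y, hxcy, hne, hx, hc, hinc, hy⟩ :=
    exists_append_of_avoidsTriple_cons_cons hP hzv (by grind)
  rw [hxcy] at harr hP ⊢
  obtain ⟨hnodup, hmem⟩ := harr
  simp only [List.nodup_append, List.mem_append, mem_union] at hnodup hmem
  obtain ⟨hxnodup, ⟨hcnodup, hynodup, -⟩, hdisj⟩ := hnodup
  have hcU : IsArrangement c U := ⟨hcnodup, by grind⟩
  obtain ⟨hgt, hxP, hyP⟩ := (avoidsTriple_cons_append_append_iff hx hc hinc
    (hcU.length_eq ▸ hcard) hy fun b hbx hby ↦ hdisj b hbx b (.inr hby) rfl).1 hP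
  obtain ⟨a, ha, hmin⟩ : ∃ a ∈ x, ∀ b ∈ x, a ≤ b := by
    simpa using x.toFinset.exists_min_image id (by simpa using hne)
  rw [hcU.eq_sort hinc]
  exact ⟨a, by grind, x, mem_arrangements.2 ⟨⟨hxnodup, by grind⟩, hxP⟩, y,
    mem_arrangements.2 ⟨⟨hynodup, by grind⟩, hyP⟩, rfl⟩

theorem card_descentWords (hL : ∀ a ∈ L, a < v) (hU : ∀ a ∈ U, v < a) (hcard : 2 ≤ #U) :
    #(descentWords v (L ∪ U)) =
      ∑ a ∈ L, pairCount #{b ∈ L | a ≤ b} * tripleCount #{b ∈ L | b < a} := by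
  simp only [← card_arrangements_avoidsPair, ← card_arrangements_avoidsTriple, ← card_product]
  rw [← card_sigma]
  symm
  refine card_nbij (fun s ↦ s.2.1 ++ (U.sort ++ s.2.2)) (fun s hs ↦ ?_) (fun s hs t ht hst ↦ ?_)
    fun r hr ↦ ?_
  · obtain ⟨ha, hxy⟩ := mem_sigma.1 hs
    obtain ⟨hx, hy⟩ := mem_product.1 hxy
    exact append_mem_descentWords hL hU hcard ha hx hy
  · obtain ⟨a, x, y⟩ := s
    obtain ⟨a', x', y'⟩ := t
    simp only [mem_coe, mem_sigma, mem_product, mem_arrangements] at hs ht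
    obtain ⟨ha, ⟨⟨-, hx⟩, -⟩, -⟩ := hs
    obtain ⟨ha', ⟨⟨-, hx'⟩, -⟩, -⟩ := ht
    simp only [mem_filter] at hx hx'
    have hne : U.sort ≠ [] := List.ne_nil_of_length_pos (by rw [length_sort]; lia)
    have hUv : ∀ a ∈ U.sort, ¬ a < v := by simpa using fun a ha ↦ (hU a ha).le
    obtain ⟨rfl, rfl⟩ := eq_and_eq_of_append_append_eq hne hUv (by grind) (by grind) hst
    obtain rfl : a = a' := by grind
    rfl
  · obtain ⟨a, ha, x, hx, y, hy, rfl⟩ := exists_append_of_mem_descentWords hL hU hcard hr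
    exact ⟨⟨a, x, y⟩, by simp [*], rfl⟩

end MixedWords

section Recurrences

open Finset

theorem range_succ_erase_eq_union (i j : ℕ) :
    (range (i + j + 1)).erase i = range i ∪ Ico (i + 1) (i + 1 + j) := by
  ext a
  simp only [mem_erase, mem_range, mem_union, mem_Ico]
  lia

theorem pairCount_succ (n : ℕ) :
    pairCount (n + 1) = pairCount n + ∑ i ∈ range n, pairCount (i + 1) := by
  rw [← card_range (n + 1), ← card_arrangements_avoidsPair, card_arrangements_eq_sum _ (by simp),
    sum_range_succ', add_comm]
  congr 1
  · rw [card_arrangements_avoidsPair_cons_of_forall_lt (by simp +contextual [Nat.pos_iff_ne_zero])]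
    simp
  · refine sum_congr rfl fun i hi ↦ ?_
    obtain ⟨j, rfl⟩ := Nat.exists_eq_add_of_lt (mem_range.1 hi)
    rw [show i + j + 1 + 1 = i + 1 + j + 1 by ring, range_succ_erase_eq_union,
      card_arrangements_avoidsPair_cons (by simp) (by grind) (by simp), card_range]

theorem pairCount_add_two (n : ℕ) :
    pairCount (n + 2) + pairCount n = 3 * pairCount (n + 1) := by
  have h₁ := pairCount_succ n
  have h₂ := pairCount_succ (n + 1)
  rw [sum_range_succ] at h₂
  lia

/-- The number of mixed words after a first letter with `i` letters below it and `j` above it. -/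
noncomputable def mixedCount (i j : ℕ) : ℕ :=
  #(mixedWords i (range i ∪ Ico (i + 1) (i + 1 + j)))

/-- The number of descent words after a first letter with `i` letters below it and `j` above
it. -/
noncomputable def descentCount (i j : ℕ) : ℕ :=
  #(descentWords i (range i ∪ Ico (i + 1) (i + 1 + j)))

theorem card_arrangements_avoidsTriple_cons (i j : ℕ) :
    #(arrangements (range i ∪ Ico (i + 1) (i + 1 + j)) fun r ↦ AvoidsTriple (i :: r)) =
      pairCount j * tripleCount i + mixedCount i j := by
  classical
  have hnot := card_arrangements_not_mixed (L := range i) (U := Ico (i + 1) (i + 1 + j)) (v := i)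
    (by simp) (by grind)
  rw [card_range, Nat.card_Ico, Nat.add_sub_cancel_left] at hnot
  rw [← hnot, mixedCount, mixedWords, ← card_filter_add_card_filter_not (Mixed i), add_comm]
  congr 2 <;> · ext; simp [mem_arrangements, and_assoc]

theorem tripleCount_succ (n : ℕ) :
    tripleCount (n + 1) =
      ∑ p ∈ antidiagonal n, (pairCount p.2 * tripleCount p.1 + mixedCount p.1 p.2) := by
  rw [← card_range (n + 1), ← card_arrangements_avoidsTriple, card_arrangements_eq_sum _ (by simp),
    Nat.sum_antidiagonal_eq_sum_range_succ_mk]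
  refine sum_congr (by simp) fun i hi ↦ ?_
  obtain ⟨j, rfl⟩ : ∃ j, n = i + j := Nat.exists_eq_add_of_le (by grind)
  rw [range_succ_erase_eq_union, card_arrangements_avoidsTriple_cons, Nat.add_sub_cancel_left]

theorem mixedCount_zero (i : ℕ) : mixedCount i 0 = 0 := by
  rw [mixedCount, mixedWords_eq_empty (by simp), card_empty]

theorem mixedCount_succ (i j : ℕ) :
    mixedCount i (j + 1) = mixedCount i j + descentCount i (j + 1) := by
  have hIco : Ico (i + 1) (i + 1 + (j + 1)) = insert (i + 1 + j) (Ico (i + 1) (i + 1 + j)) := by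
    rw [← add_assoc]
    exact (insert_Ico_right_eq_Ico_add_one (by lia)).symm
  rw [mixedCount, descentCount, hIco]
  exact card_mixedWords_insert (by simp) (by grind) (by lia)

theorem descentCount_one (i : ℕ) : descentCount i 1 + tripleCount i = tripleCount (i + 1) := by
  have h := card_descentWords_insert_singleton (L := range i) (v := i) (M := i + 1) (by simp)
    (by lia)
  rw [descentCount, Nat.Ico_succ_singleton, union_comm, ← insert_eq]
  simpa using h

theorem descentCount_add_two (i j : ℕ) :
    descentCount i (j + 2) + tripleCount i =
      ∑ p ∈ antidiagonal i, tripleCount p.1 * pairCount p.2 := by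
  rw [descentCount, card_descentWords (by simp) (by grind) (by simp),
    Nat.sum_antidiagonal_eq_sum_range_succ_mk, sum_range_succ, Nat.sub_self, pairCount_zero,
    mul_one]
  congr 1
  refine sum_congr rfl fun a ha ↦ ?_
  have hge : {b ∈ range i | a ≤ b} = Ico a i := by grind
  have hlt : {b ∈ range i | b < a} = range a := by grind
  rw [hge, hlt, Nat.card_Ico, card_range, mul_comm]

end Recurrences

section GeneratingFunctions

open Finset.HasAntidiagonal (antidiagonal)

theorem mk_eq_C_add_X_mul {R : Type*} [Semiring R] (g : ℕ → R) :
    mk g = C (g 0) + X * mk fun n ↦ g (n + 1) := by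
  rw [eq_X_mul_shift_add_const (mk g), add_comm]
  simp [← coeff_zero_eq_constantCoeff_apply]

/-- The series `∑ h(i, j) xⁱ⁺ʲ`: the bivariate generating function of `h` with both variables set
to `x`. -/
noncomputable def diagonalGF (h : ℕ → ℕ → ℕ) : ℚ⟦X⟧ :=
  mk fun n ↦ ∑ p ∈ antidiagonal n, (h p.1 p.2 : ℚ)

theorem diagonalGF_add (g h : ℕ → ℕ → ℕ) :
    diagonalGF (fun i j ↦ g i j + h i j) = diagonalGF g + diagonalGF h := by
  ext n
  simp [diagonalGF, Finset.sum_add_distrib]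

theorem diagonalGF_mul (f g : ℕ → ℕ) :
    diagonalGF (fun i j ↦ f i * g j) = mk (fun n ↦ (f n : ℚ)) * mk fun n ↦ (g n : ℚ) := by
  ext n
  simp [diagonalGF, coeff_mul]

theorem diagonalGF_eq (h : ℕ → ℕ → ℕ) :
    diagonalGF h = mk (fun i ↦ (h i 0 : ℚ)) + X * diagonalGF fun i j ↦ h i (j + 1) := by
  ext n
  cases n with
  | zero => simp [diagonalGF]
  | succ n => simp [diagonalGF, coeff_succ_X_mul, Finset.Nat.sum_antidiagonal_succ']

/-- The generating function of the avoiders of 1342, 2143 and 2314. -/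
noncomputable def tripleGF : ℚ⟦X⟧ := mk fun n ↦ (tripleCount n : ℚ)

/-- The generating function of the avoiders of 231 and 2143. -/
noncomputable def pairGF : ℚ⟦X⟧ := mk fun n ↦ (pairCount n : ℚ)

theorem pairGF_eq : (1 - 3 * X + X ^ 2) * pairGF = 1 - 2 * X := by
  have h₀ := mk_eq_C_add_X_mul fun n ↦ (pairCount n : ℚ)
  have h₁ := mk_eq_C_add_X_mul fun n ↦ (pairCount (n + 1) : ℚ)
  have hrec : mk (fun n ↦ (pairCount (n + 2) : ℚ)) + mk (fun n ↦ (pairCount n : ℚ)) =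
      3 * mk fun n ↦ (pairCount (n + 1) : ℚ) := by
    ext n
    rw [← map_ofNat C, coeff_C_mul]
    simpa using mod_cast pairCount_add_two n
  rw [pairCount_zero, Nat.cast_one, map_one] at h₀
  rw [pairCount_succ, pairCount_zero, Finset.sum_range_zero, add_zero, Nat.cast_one, map_one] at h₁
  rw [pairGF]
  linear_combination (1 - 3 * X) * h₀ + X * h₁ + X ^ 2 * hrec

theorem tripleGF_eq : tripleGF = 1 + X * (tripleGF * pairGF + diagonalGF mixedCount) := by
  have hsucc : mk (fun n ↦ (tripleCount (n + 1) : ℚ)) =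
      diagonalGF fun i j ↦ tripleCount i * pairCount j + mixedCount i j := by
    ext n
    simp [diagonalGF, tripleCount_succ, mul_comm]
  rw [tripleGF, pairGF, ← diagonalGF_mul, ← diagonalGF_add, ← hsucc, mk_eq_C_add_X_mul,
    tripleCount_zero, Nat.cast_one, map_one]

theorem diagonalGF_mixedCount_eq :
    (1 - X) * diagonalGF mixedCount = X * diagonalGF fun i j ↦ descentCount i (j + 1) := by
  have h := diagonalGF_eq mixedCount
  simp only [mixedCount_zero, mixedCount_succ, diagonalGF_add, Nat.cast_zero] at h
  have hzero : mk (fun _ : ℕ ↦ (0 : ℚ)) = 0 := rfl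
  linear_combination h + hzero

theorem diagonalGF_descentCount_add_two_eq :
    (1 - X) * diagonalGF (fun i j ↦ descentCount i (j + 2)) =
      tripleGF * pairGF - tripleGF := by
  have hconst (i j : ℕ) : descentCount i (j + 1 + 2) = descentCount i (j + 2) := by
    have := descentCount_add_two i j
    have := descentCount_add_two i (j + 1)
    lia
  have hzero : mk (fun i ↦ (descentCount i 2 : ℚ)) + tripleGF = tripleGF * pairGF := by
    ext n
    simpa [tripleGF, pairGF, coeff_mul] using mod_cast descentCount_add_two n 0
  have h := diagonalGF_eq fun i j ↦ descentCount i (j + 2)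
  simp only [hconst, zero_add] at h
  linear_combination h + hzero

theorem diagonalGF_descentCount_add_one_eq :
    X * (1 - X) * diagonalGF (fun i j ↦ descentCount i (j + 1)) =
      (1 - X) * (tripleGF - 1 - X * tripleGF) + X ^ 2 * (tripleGF * pairGF - tripleGF) := by
  have hone : mk (fun i ↦ (descentCount i 1 : ℚ)) + tripleGF =
      mk fun n ↦ (tripleCount (n + 1) : ℚ) := by
    ext n
    simpa [tripleGF] using mod_cast descentCount_one n
  have hshift : tripleGF = 1 + X * mk fun n ↦ (tripleCount (n + 1) : ℚ) := by
    rw [tripleGF, mk_eq_C_add_X_mul, tripleCount_zero, Nat.cast_one, map_one]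
  have h := diagonalGF_eq fun i j ↦ descentCount i (j + 1)
  simp only [zero_add] at h
  linear_combination X * (1 - X) * h + X * (1 - X) * hone - (1 - X) * hshift +
    X ^ 2 * diagonalGF_descentCount_add_two_eq

theorem tripleGF_rational :
    (1 - 6 * X + 11 * X ^ 2 - 7 * X ^ 3) * tripleGF = (1 - 2 * X) * (1 - 3 * X + X ^ 2) := by
  have hne : (1 - X : ℚ⟦X⟧) ≠ 0 := fun h ↦ by simpa using congrArg constantCoeff h
  have hF : (1 - X) ^ 2 * (tripleGF - 1 - X * (tripleGF * pairGF)) =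
      X * ((1 - X) * (tripleGF - 1 - X * tripleGF) +
        X ^ 2 * (tripleGF * pairGF - tripleGF)) := by
    linear_combination (1 - X) ^ 2 * tripleGF_eq + X * (1 - X) * diagonalGF_mixedCount_eq +
      X * diagonalGF_descentCount_add_one_eq
  apply mul_left_cancel₀ hne
  linear_combination (1 - 3 * X + X ^ 2) * hF +
    (X * (1 - X) ^ 2 + X ^ 3) * tripleGF * pairGF_eq

end GeneratingFunctions

section Permutations

theorem ofFn_sublist_ofFn_iff {α : Type*} {k n : ℕ} {g : Fin k → α} {h : Fin n → α} :
    (List.ofFn g).Sublist (List.ofFn h) ↔ ∃ f : Fin k ↪o Fin n, g = h ∘ f := by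
  rw [List.sublist_iff_exists_fin_orderEmbedding_get_eq]
  have hk : (List.ofFn g).length = k := List.length_ofFn
  have hn : (List.ofFn h).length = n := List.length_ofFn
  refine ⟨fun ⟨f, hf⟩ ↦ ⟨(Fin.castOrderIso hk.symm).toOrderEmbedding.trans
    (f.trans (Fin.castOrderIso hn).toOrderEmbedding), funext fun i ↦ ?_⟩, fun ⟨f, hf⟩ ↦
    ⟨(Fin.castOrderIso hk).toOrderEmbedding.trans
      (f.trans (Fin.castOrderIso hn.symm).toOrderEmbedding), fun i ↦ ?_⟩⟩
  · simpa [Fin.cast] using hf (i.cast hk.symm)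
  · simp [hf, Fin.cast]

variable {n : ℕ}

theorem wordContains_ofFn_iff {k : ℕ} {π : Equiv.Perm (Fin n)} {σ : Fin k → Fin k} :
    WordContains σ (List.ofFn π) ↔ ContainsPattern π σ := by
  simp only [WordContains, ContainsPattern, ofFn_sublist_ofFn_iff]
  constructor
  · rintro ⟨-, ⟨f, rfl⟩, hσ⟩
    exact ⟨f, hσ⟩
  · rintro ⟨f, hσ⟩
    exact ⟨π ∘ f, ⟨f, rfl⟩, hσ⟩

theorem isArrangement_univ_iff {l : List (Fin n)} :
    IsArrangement l .univ ↔ ∃ π : Equiv.Perm (Fin n), List.ofFn π = l := by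
  constructor
  · intro h
    have hlen : l.length = n := by simpa using h.length_eq
    refine ⟨(finCongr hlen.symm).trans
      (h.1.getEquivOfForallMemList l fun a ↦ (h.2 a).2 (Finset.mem_univ a)), ?_⟩
    exact List.ext_getElem (by simp [hlen]) (by simp)
  · rintro ⟨π, rfl⟩
    exact ⟨List.nodup_ofFn.2 π.injective, fun a ↦ by simpa [List.mem_ofFn] using π.surjective a⟩

theorem avoiderCount_eq (T : Set (Fin 4 → Fin 4)) :
    avoiderCount T n = (arrangements .univ fun l : List (Fin n) ↦
      ∀ σ ∈ T, ¬ WordContains σ l).card := by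
  rw [avoiderCount, ← Nat.card_eq_finsetCard]
  refine Nat.card_congr (Equiv.ofBijective (fun π ↦ ⟨List.ofFn π.1, mem_arrangements.2
    ⟨isArrangement_univ_iff.2 ⟨π.1, rfl⟩, by simpa [wordContains_ofFn_iff] using π.2⟩⟩)
    ⟨fun π ρ h ↦ ?_, fun ⟨l, hl⟩ ↦ ?_⟩)
  · exact Subtype.ext (DFunLike.coe_injective (List.ofFn_injective (congrArg Subtype.val h)))
  · obtain ⟨harr, hP⟩ := mem_arrangements.1 hl
    obtain ⟨π, rfl⟩ := isArrangement_univ_iff.1 harr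
    exact ⟨⟨π, by simpa [wordContains_ofFn_iff] using hP⟩, rfl⟩

end Permutations

theorem statement_6 :
    ((1 : PowerSeries ℚ) - 6*X + 11*X^2 - 7*X^3) * avoiderGF ({![0,2,3,1], ![1,0,3,2], ![1,2,0,3]} : Set (Fin 4 → Fin 4)) =
      (1 - 2*X) * (1 - 3*X + X^2) := by
  have hcount (n : ℕ) :
      avoiderCount {![0, 2, 3, 1], ![1, 0, 3, 2], ![1, 2, 0, 3]} n = tripleCount n :=
    avoiderCount_eq _
  simp only [avoiderGF, hcount]
  exact tripleGF_rational
end
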